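/- arXiv:1404.2907 — 8 statements merged into one kernel-verified Lean document; each statement's English description precedes it below -/
import Mathlib

section
/- Let (α₁, α₂) ∈ ℝ² be a point on the unit circle (α₁² + α₂² = 1) with (α₁, α₂) ∉ ℚ², and let ε > 0. Then there exist infinitely many triples (Q, A₁, A₂) of integers with Q ≥ 1 and A₁² + A₂² = Q² such that √((α₁ − A₁/Q)² + (α₂ − A₂/Q)²) < (1 + ε)/(√2 · Q). -/
/-!
Stereographic projection from `(-1, 0)` identifies the point with an irrational slope `ξ`, and
`p / q` with the Pythagorean triple `(q² + p², q² - p², 2qp)`, which is divisible by `2` when `q`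
and `p` are both odd. Near the point, projection multiplies distances by about `2 / (1 + ξ²)`, so
we need `|q (q ξ - p)|` to be at most `1 / (2√2)`, or merely at most `1 / √2` if `q` and `p` are
both odd.

An approximation from Dirichlet's theorem is completed to a basis of `ℤ²` on whose two members the
form `q (q ξ - p)` has opposite signs. Modulo `2`, the two members and their sum are the three
nonzero classes, so there is also a basis `u, v` for which `u ± v` are odd-odd. The form has
discriminant `1` in that basis and changes sign among `u`, `v`, `u + v`, `u - v`; an inequality for
the coefficients of such a form shows that one of these four vectors is good enough.
-/

section IndefiniteForm

variable {K : Type*} [Field K] [LinearOrder K] [IsStrictOrderedRing K] {A B C : K}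

theorem small_value_of_discrim_eq_one_of_mul_nonpos (hdisc : discrim A B C = 1)
    (hAC : A * C ≤ 0) :
    8 * A ^ 2 ≤ 1 ∨ 8 * C ^ 2 ≤ 1 ∨ 2 * (A + B + C) ^ 2 ≤ 1 ∨ 2 * (A - B + C) ^ 2 ≤ 1 := by
  rw [discrim] at hdisc
  by_contra! ⟨hA, hC, hadd, hsub⟩
  have hAC_sq : (1 / 8) ^ 2 < (A * C) ^ 2 := by
    nlinarith [mul_pos (sub_pos.2 hA) (sub_pos.2 hC)]
  have hAC_lt : A * C < -(1 / 8) := by nlinarith only [hAC_sq, hAC]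
  have hprod_eq : (A + B + C) * (A - B + C) = (A - C) ^ 2 - 1 := by linear_combination -hdisc
  have hprod_gt : -(1 / 2) < (A + B + C) * (A - B + C) := by
    nlinarith only [hprod_eq, hAC_lt, sq_nonneg (A + C)]
  have hprod_sq : (1 / 2) ^ 2 < ((A + B + C) * (A - B + C)) ^ 2 := by
    nlinarith [mul_pos (sub_pos.2 hadd) (sub_pos.2 hsub)]
  have hprod : 1 / 2 < (A + B + C) * (A - B + C) := by nlinarith only [hprod_sq, hprod_gt]
  have hsum : 1 / 2 < (A + C) ^ 2 := by nlinarith only [hprod, sq_nonneg B]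
  have hAC_ge : -(1 / 4) ≤ A * C := by nlinarith only [hdisc, sq_nonneg B]
  -- Expand `0 < (8 A² - 1) (8 C² - 1)` in terms of `A C` and `A + C`.
  nlinarith only [mul_pos (sub_pos.2 hA) (sub_pos.2 hC), hsum, hAC_lt, hAC_ge]

theorem small_value_of_discrim_eq_one (hdisc : discrim A B C = 1)
    (hsign : A * C ≤ 0 ∨ (A + B + C) * (A - B + C) ≤ 0) :
    8 * A ^ 2 ≤ 1 ∨ 8 * C ^ 2 ≤ 1 ∨ 2 * (A + B + C) ^ 2 ≤ 1 ∨ 2 * (A - B + C) ^ 2 ≤ 1 := by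
  rcases hsign with hAC | hprod
  · exact small_value_of_discrim_eq_one_of_mul_nonpos hdisc hAC
  · -- Half the form, written in the basis `u + v, v - u`, exchanges the two pairs of values.
    rw [discrim] at hdisc
    have hdual := small_value_of_discrim_eq_one_of_mul_nonpos
      (A := (A + B + C) / 2) (B := C - A) (C := (A - B + C) / 2)
      (by rw [discrim]; linear_combination hdisc) (by linarith)
    ring_nf at hdual ⊢
    tauto

theorem mul_nonpos_or_mul_nonpos_of_parallelogram {a b d e : K} (h : e + d = 2 * (a + b))
    (hneg : d * b < 0) : a * b ≤ 0 ∨ e * d ≤ 0 := by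
  by_contra! ⟨hab, hed⟩
  have heb : e * b = 2 * (a * b) + 2 * b ^ 2 - d * b := by linear_combination b * h
  have heb_pos : 0 < e * b := by rw [heb]; linarith [sq_nonneg b]
  nlinarith only [hneg, mul_pos hed heb_pos, sq_nonneg e]

end IndefiniteForm

/-- The quadratic form `q (q ξ - p) = q² (ξ - p / q)`, which measures how well `p / q`
approximates `ξ`. -/
def approxForm (ξ : ℝ) (q p : ℤ) : ℝ := q * (q * ξ - p)

/-- `p / q` is a reduced fraction whose image under stereographic projection approximates the
image of `ξ` with the optimal constant `1 / √2`, up to a factor that tends to `1`. The requirement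
on `q² |ξ - p / q|` is weaker by a factor of `2` for `q` and `p` both odd, because the
corresponding Pythagorean triple `(q² + p², q² - p², 2qp)` is then divisible by `2`. -/
def IsGoodApprox (ξ : ℝ) (q p : ℤ) : Prop :=
  IsCoprime q p ∧
    (8 * approxForm ξ q p ^ 2 ≤ 1 ∨ (Odd q ∧ Odd p) ∧ 2 * approxForm ξ q p ^ 2 ≤ 1)

section Approximation

variable {ξ : ℝ} {q p q' p' : ℤ}

theorem odd_add_odd_add_of_det_eq_one (hdet : q * p' - q' * p = 1) (hqp : ¬(Odd q ∧ Odd p))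
    (hqp' : ¬(Odd q' ∧ Odd p')) : Odd (q + q') ∧ Odd (p + p') := by
  have hodd : Odd (q * p' - q' * p) := hdet ▸ odd_one
  simp only [Int.odd_sub, Int.odd_add, Int.odd_mul, ← Int.not_odd_iff_even] at *
  tauto

theorem approxForm_neg_neg (ξ : ℝ) (q p : ℤ) : approxForm ξ (-q) (-p) = approxForm ξ q p := by
  simp only [approxForm]; push_cast; ring

theorem abs_add_mul_sub_add_le (ξ : ℝ) (q p q' p' : ℤ) :
    |((q + q' : ℤ) : ℝ) * ξ - (p + p' : ℤ)| ≤ |q * ξ - p| + |q' * ξ - p'| := by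
  calc |((q + q' : ℤ) : ℝ) * ξ - (p + p' : ℤ)| = |(q * ξ - p) + (q' * ξ - p')| := by
        push_cast; ring_nf
    _ ≤ |q * ξ - p| + |q' * ξ - p'| := abs_add_le _ _

theorem abs_sub_mul_sub_sub_le (ξ : ℝ) (q p q' p' : ℤ) :
    |((q - q' : ℤ) : ℝ) * ξ - (p - p' : ℤ)| ≤ |q * ξ - p| + |q' * ξ - p'| := by
  calc |((q - q' : ℤ) : ℝ) * ξ - (p - p' : ℤ)| = |(q * ξ - p) - (q' * ξ - p')| := by
        push_cast; ring_nf
    _ ≤ |q * ξ - p| + |q' * ξ - p'| := abs_sub _ _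

theorem exists_isGoodApprox_of_odd_add (hdet : q * p' - q' * p = 1)
    (hodd : Odd (q + q') ∧ Odd (p + p'))
    (hsign : approxForm ξ q p * approxForm ξ q' p' ≤ 0 ∨
      approxForm ξ (q + q') (p + p') * approxForm ξ (q - q') (p - p') ≤ 0) :
    ∃ a b : ℤ, IsGoodApprox ξ a b ∧ |a * ξ - b| ≤ |q * ξ - p| + |q' * ξ - p'| := by
  have hdetℝ : (q : ℝ) * p' - q' * p = 1 := mod_cast hdet
  have hodd_sub : Odd (q - q') ∧ Odd (p - p') := by
    simpa only [Int.odd_sub, Int.odd_add] using hodd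
  set B : ℝ := q * (q' * ξ - p') + q' * (q * ξ - p)
  have hadd : approxForm ξ (q + q') (p + p') = approxForm ξ q p + B + approxForm ξ q' p' := by
    simp only [approxForm, B]; push_cast; ring
  have hsub : approxForm ξ (q - q') (p - p') = approxForm ξ q p - B + approxForm ξ q' p' := by
    simp only [approxForm, B]; push_cast; ring
  have hdisc : discrim (approxForm ξ q p) B (approxForm ξ q' p') = 1 := by
    simp only [discrim, approxForm, B]
    linear_combination ((q : ℝ) * p' - q' * p + 1) * hdetℝ
  rw [hadd, hsub] at hsign
  rcases small_value_of_discrim_eq_one hdisc hsign with h | h | h | h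
  · exact ⟨q, p, ⟨⟨p', -q', by linear_combination hdet⟩, .inl h⟩,
      le_add_of_nonneg_right (abs_nonneg _)⟩
  · exact ⟨q', p', ⟨⟨-p, q, by linear_combination hdet⟩, .inl h⟩,
      le_add_of_nonneg_left (abs_nonneg _)⟩
  · exact ⟨q + q', p + p', ⟨⟨p', -q', by linear_combination hdet⟩, .inr ⟨hodd, hadd ▸ h⟩⟩,
      abs_add_mul_sub_add_le ξ q p q' p'⟩
  · exact ⟨q - q', p - p', ⟨⟨p', -q', by linear_combination hdet⟩, .inr ⟨hodd_sub, hsub ▸ h⟩⟩,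
      abs_sub_mul_sub_sub_le ξ q p q' p'⟩

theorem exists_isGoodApprox_of_odd (hdet : q * p' - q' * p = 1) (hodd : Odd q ∧ Odd p)
    (hneg : approxForm ξ q p * approxForm ξ q' p' < 0) :
    ∃ a b : ℤ, IsGoodApprox ξ a b ∧ |a * ξ - b| ≤ 2 * (|q * ξ - p| + |q' * ξ - p'|) := by
  have hparallelogram : approxForm ξ (q + q' + q') (p + p' + p') + approxForm ξ q p =
      2 * (approxForm ξ (q + q') (p + p') + approxForm ξ q' p') := by
    simp only [approxForm]; push_cast; ring
  have hsign := mul_nonpos_or_mul_nonpos_of_parallelogram hparallelogram hneg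
  obtain ⟨a, b, hgood, hab⟩ := exists_isGoodApprox_of_odd_add (ξ := ξ) (q := q + q') (p := p + p')
    (q' := q') (p' := p') (by linear_combination hdet)
    ⟨by simpa [add_assoc, ← two_mul] using hodd.1.add_even (even_two_mul q'),
      by simpa [add_assoc, ← two_mul] using hodd.2.add_even (even_two_mul p')⟩
    (by simpa only [add_sub_cancel_right] using hsign)
  refine ⟨a, b, hgood, ?_⟩
  linarith [abs_add_mul_sub_add_le ξ q p q' p', abs_nonneg (q * ξ - p)]

theorem exists_isGoodApprox_of_approxForm_mul_neg (hdet : q * p' - q' * p = 1)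
    (hneg : approxForm ξ q p * approxForm ξ q' p' < 0) :
    ∃ a b : ℤ, IsGoodApprox ξ a b ∧ |a * ξ - b| ≤ 2 * (|q * ξ - p| + |q' * ξ - p'|) := by
  by_cases hqp : Odd q ∧ Odd p
  · exact exists_isGoodApprox_of_odd hdet hqp hneg
  by_cases hqp' : Odd q' ∧ Odd p'
  · obtain ⟨a, b, hgood, hab⟩ := exists_isGoodApprox_of_odd (ξ := ξ) (q := -q') (p := -p')
      (q' := q) (p' := p) (by linear_combination hdet) ⟨hqp'.1.neg, hqp'.2.neg⟩
      (by rwa [approxForm_neg_neg, mul_comm])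
    have hneg_abs : |((-q' : ℤ) : ℝ) * ξ - (-p' : ℤ)| = |q' * ξ - p'| := by
      rw [← abs_neg]; push_cast; ring_nf
    exact ⟨a, b, hgood, by linarith⟩
  · obtain ⟨a, b, hgood, hab⟩ := exists_isGoodApprox_of_odd_add hdet
      (odd_add_odd_add_of_det_eq_one hdet hqp hqp') (.inl hneg.le)
    exact ⟨a, b, hgood, hab.trans (le_mul_of_one_le_left (by positivity) one_le_two)⟩

theorem exists_det_eq_one_and_approxForm_mul_neg (hqp : IsCoprime q p) (hq : 0 < q)
    (hne : q * ξ - p ≠ 0) (hlt : q * |q * ξ - p| < 1) :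
    ∃ q' p' : ℤ, q * p' - q' * p = 1 ∧ approxForm ξ q p * approxForm ξ q' p' < 0 ∧
      |q' * ξ - p'| ≤ |q * ξ - p| := by
  have hqℝ : (0 : ℝ) < q := mod_cast hq
  obtain ⟨s, r, hsr⟩ := hqp
  obtain ⟨e, he⟩ : ∃ e : ℤ, |q * ξ - p| = e * (q * ξ - p) := by
    rcases abs_choice (q * ξ - p) with h | h
    · exact ⟨1, by simpa using h⟩
    · exact ⟨-1, by simpa using h⟩
  -- Adding multiples of `(q, p)` to a solution of the determinant equation moves the error into
  -- `[-|q ξ - p|, 0)`.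
  obtain ⟨k, ⟨hge, hneg⟩, -⟩ :=
    existsUnique_add_zsmul_mem_Ico (abs_pos.2 hne) (-r * ξ - s) (-|q * ξ - p|)
  set q' : ℤ := -r + k * e * q
  set p' : ℤ := s + k * e * p
  have herr : -r * ξ - s + k • |q * ξ - p| = q' * ξ - p' := by
    simp only [zsmul_eq_mul, he, q', p']; push_cast; ring
  rw [herr] at hge hneg
  rw [neg_add_cancel] at hneg
  have hdet : q * p' - q' * p = 1 := by simp only [q', p']; linear_combination hsr
  have hdetℝ : (q : ℝ) * p' - q' * p = 1 := mod_cast hdet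
  refine ⟨q', p', hdet, ?_, ?_⟩
  · have hprod : approxForm ξ q p * approxForm ξ q' p' =
        q * (q' * ξ - p') * (1 + q * (q' * ξ - p')) := by
      simp only [approxForm]
      linear_combination (q * (q' * ξ - p') : ℝ) * hdetℝ
    rw [hprod]
    exact mul_neg_of_neg_of_pos (mul_neg_of_pos_of_neg hqℝ hneg) (by nlinarith)
  · rw [abs_of_neg hneg]
    linarith

theorem exists_coprime_mul_abs_lt_one (ξ : ℝ) {δ : ℝ} (hδ : 0 < δ) :
    ∃ q p : ℤ, IsCoprime q p ∧ 0 < q ∧ q * |q * ξ - p| < 1 ∧ |q * ξ - p| < δ := by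
  obtain ⟨n, hn⟩ := exists_nat_one_div_lt hδ
  obtain ⟨r, hr, hden⟩ := Real.exists_rat_abs_sub_le_and_den_le ξ n.succ_pos
  have hden_pos : (0 : ℝ) < r.den := mod_cast r.pos
  have hden_le : (r.den : ℝ) ≤ n + 1 := mod_cast hden
  have hcast : (r.den : ℝ) * r = r.num := mod_cast r.den_mul_eq_num
  have herr : |r.den * ξ - r.num| ≤ 1 / (n + 2) := by
    calc |r.den * ξ - r.num| = r.den * |ξ - r| := by
          rw [← hcast, ← mul_sub, abs_mul, abs_of_pos hden_pos]
      _ ≤ r.den * (1 / ((n.succ + 1) * r.den)) := by gcongr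
      _ = 1 / (n + 2) := by push_cast; field_simp; ring
  refine ⟨r.den, r.num, ?_, mod_cast r.pos, ?_, ?_⟩
  · exact Int.isCoprime_iff_gcd_eq_one.2 r.reduced.symm
  · calc ((r.den : ℤ) : ℝ) * |(r.den : ℤ) * ξ - r.num| ≤ (n + 1) * (1 / (n + 2)) := by
          rw [Int.cast_natCast]; gcongr
      _ < 1 := by rw [mul_one_div, div_lt_one (by positivity)]; linarith
  · calc |((r.den : ℤ) : ℝ) * ξ - r.num| ≤ 1 / (n + 2) := by rwa [Int.cast_natCast]
      _ ≤ 1 / (n + 1) := by gcongr; norm_num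
      _ < δ := hn

theorem exists_isGoodApprox_abs_lt (hξ : Irrational ξ) {δ : ℝ} (hδ : 0 < δ) :
    ∃ q p : ℤ, IsGoodApprox ξ q p ∧ |q * ξ - p| < δ := by
  obtain ⟨q, p, hcop, hq, hlt, hsmall⟩ :=
    exists_coprime_mul_abs_lt_one ξ (δ := δ / 4) (by positivity)
  have hne : q * ξ - p ≠ 0 := sub_ne_zero.2 ((hξ.intCast_mul hq.ne').ne_int p)
  obtain ⟨q', p', hdet, hneg, hle⟩ := exists_det_eq_one_and_approxForm_mul_neg hcop hq hne hlt
  obtain ⟨a, b, hgood, hab⟩ := exists_isGoodApprox_of_approxForm_mul_neg hdet hneg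
  exact ⟨a, b, hgood, by linarith⟩

end Approximation

/-- The Euclidean distance from `(α₁, α₂)` to `(A₁ / Q, A₂ / Q)`, where `t = (Q, A₁, A₂)`. -/
noncomputable def distToRationalPoint (α₁ α₂ : ℝ) (t : ℤ × ℤ × ℤ) : ℝ :=
  √((α₁ - t.2.1 / t.1) ^ 2 + (α₂ - t.2.2 / t.1) ^ 2)

theorem distToRationalPoint_pos {α₁ α₂ : ℝ}
    (hirr : ¬∃ r₁ r₂ : ℚ, α₁ = (r₁ : ℝ) ∧ α₂ = (r₂ : ℝ)) (t : ℤ × ℤ × ℤ) :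
    0 < distToRationalPoint α₁ α₂ t := by
  refine Real.sqrt_pos.2 (lt_of_le_of_ne (by positivity) fun h ↦ hirr ?_)
  have hcoord := (add_eq_zero_iff_of_nonneg (sq_nonneg _) (sq_nonneg _)).1 h.symm
  exact ⟨t.2.1 / t.1, t.2.2 / t.1,
    by push_cast; exact sub_eq_zero.1 (pow_eq_zero_iff two_ne_zero |>.1 hcoord.1),
    by push_cast; exact sub_eq_zero.1 (pow_eq_zero_iff two_ne_zero |>.1 hcoord.2)⟩

section Circle

variable {ξ : ℝ}

theorem exists_irrational_stereographic {α₁ α₂ : ℝ} (hsphere : α₁ ^ 2 + α₂ ^ 2 = 1)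
    (hirr : ¬∃ r₁ r₂ : ℚ, α₁ = (r₁ : ℝ) ∧ α₂ = (r₂ : ℝ)) :
    ∃ ξ : ℝ, Irrational ξ ∧ α₁ = (1 - ξ ^ 2) / (1 + ξ ^ 2) ∧ α₂ = 2 * ξ / (1 + ξ ^ 2) := by
  have hα₁ : 1 + α₁ ≠ 0 := fun h ↦ hirr ⟨-1, 0, by push_cast; linarith,
    by push_cast; nlinarith⟩
  set ξ := α₂ / (1 + α₁)
  have hden : 1 + ξ ^ 2 ≠ 0 := by positivity
  have hmul : ξ * (1 + α₁) = α₂ := div_mul_cancel₀ _ hα₁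
  have hα₁_eq : α₁ = (1 - ξ ^ 2) / (1 + ξ ^ 2) := by
    rw [eq_div_iff hden]
    apply mul_left_cancel₀ hα₁
    linear_combination hsphere + (ξ * (1 + α₁) + α₂) * hmul
  have hα₂_eq : α₂ = 2 * ξ / (1 + ξ ^ 2) := by
    rw [← hmul, hα₁_eq]
    field_simp
    ring
  refine ⟨ξ, ?_, hα₁_eq, hα₂_eq⟩
  rintro ⟨r, hr⟩
  exact hirr ⟨(1 - r ^ 2) / (1 + r ^ 2), 2 * r / (1 + r ^ 2),
    by push_cast; rw [hr, hα₁_eq], by push_cast; rw [hr, hα₂_eq]⟩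

theorem IsGoodApprox.exists_pythagorean {q p : ℤ} (h : IsGoodApprox ξ q p) :
    ∃ Q A₁ A₂ : ℤ, 1 ≤ Q ∧ A₁ ^ 2 + A₂ ^ 2 = Q ^ 2 ∧ (Q : ℝ) ≤ q ^ 2 + p ^ 2 ∧
      (A₁ / Q : ℝ) = (q ^ 2 - p ^ 2) / (q ^ 2 + p ^ 2) ∧
      (A₂ / Q : ℝ) = 2 * q * p / (q ^ 2 + p ^ 2) ∧
      8 * approxForm ξ q p ^ 2 * Q ^ 2 ≤ (q ^ 2 + p ^ 2 : ℝ) ^ 2 := by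
  obtain ⟨hcop, hform | ⟨⟨⟨m, rfl⟩, ⟨n, rfl⟩⟩, hform⟩⟩ := h
  · have hpos : 0 < q ^ 2 + p ^ 2 := lt_of_le_of_ne (by positivity) hcop.sq_add_sq_ne_zero.symm
    refine ⟨q ^ 2 + p ^ 2, q ^ 2 - p ^ 2, 2 * q * p, hpos, by ring, by push_cast; rfl,
      by push_cast; rfl, by push_cast; rfl, ?_⟩
    push_cast
    exact mul_le_of_le_one_left (sq_nonneg _) hform
  · have hQ : (((2 * m + 1 : ℤ) : ℝ) ^ 2 + (2 * n + 1 : ℤ) ^ 2) =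
        2 * ((m + n + 1) ^ 2 + (m - n) ^ 2 : ℤ) := by push_cast; ring
    have hpos : 0 < (m + n + 1) ^ 2 + (m - n) ^ 2 := by
      refine lt_of_le_of_ne (by positivity) fun h ↦ hcop.sq_add_sq_ne_zero ?_
      linear_combination -2 * h
    have hposℝ : (0 : ℝ) < ((m + n + 1) ^ 2 + (m - n) ^ 2 : ℤ) := mod_cast hpos
    refine ⟨(m + n + 1) ^ 2 + (m - n) ^ 2, 2 * (m + n + 1) * (m - n),
      (m + n + 1) ^ 2 - (m - n) ^ 2, hpos, by ring, by linarith, ?_, ?_, ?_⟩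
    · rw [hQ, div_eq_div_iff hposℝ.ne' (by positivity)]
      push_cast; ring
    · rw [hQ, div_eq_div_iff hposℝ.ne' (by positivity)]
      push_cast; ring
    · rw [hQ]
      have hscaled := mul_le_mul_of_nonneg_right hform
        (sq_nonneg (((m + n + 1) ^ 2 + (m - n) ^ 2 : ℤ) : ℝ))
      linarith

theorem sq_dist_stereographic (ξ : ℝ) {q p : ℝ} (hqp : q ^ 2 + p ^ 2 ≠ 0) :
    ((1 - ξ ^ 2) / (1 + ξ ^ 2) - (q ^ 2 - p ^ 2) / (q ^ 2 + p ^ 2)) ^ 2 +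
      (2 * ξ / (1 + ξ ^ 2) - 2 * q * p / (q ^ 2 + p ^ 2)) ^ 2 =
    4 * (q * ξ - p) ^ 2 / ((1 + ξ ^ 2) * (q ^ 2 + p ^ 2)) := by
  have hξ : 1 + ξ ^ 2 ≠ 0 := by positivity
  field_simp
  ring

-- `q² + p² = q² (1 + ξ²) - 2 q (q ξ - p) ξ + (q ξ - p)²`, and only the first term matters.
theorem four_mul_sq_mul_add_sq_le {q p : ℤ} (herr : |q * ξ - p| ≤ 1)
    (hform : approxForm ξ q p ^ 2 ≤ 1) :
    4 * (q * ξ - p) ^ 2 * (q ^ 2 + p ^ 2) ≤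
      (4 * approxForm ξ q p ^ 2 + 8 * (q * ξ - p) ^ 2) * (1 + ξ ^ 2) := by
  have hexpand : (q ^ 2 + p ^ 2 : ℝ) * (q * ξ - p) ^ 2 = approxForm ξ q p ^ 2 * (1 + ξ ^ 2) +
      (q * ξ - p) ^ 2 * ((q * ξ - p) ^ 2 - 2 * approxForm ξ q p * ξ) := by
    simp only [approxForm]; ring
  have hcross : (q * ξ - p) ^ 2 - 2 * approxForm ξ q p * ξ ≤ 2 * (1 + ξ ^ 2) := by
    nlinarith [sq_le_one_iff_abs_le_one _ |>.2 herr, sq_nonneg (approxForm ξ q p + ξ),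
      sq_nonneg ξ]
  nlinarith [mul_le_mul_of_nonneg_left hcross (sq_nonneg (q * ξ - p))]

theorem sq_mul_sq_dist_stereographic_le {q p Q : ℤ} (hQ : (Q : ℝ) ≤ q ^ 2 + p ^ 2) (hQ_pos : 1 ≤ Q)
    (herr : |q * ξ - p| ≤ 1) (hform : approxForm ξ q p ^ 2 ≤ 1)
    (hformQ : 8 * approxForm ξ q p ^ 2 * Q ^ 2 ≤ (q ^ 2 + p ^ 2 : ℝ) ^ 2) :
    (Q : ℝ) ^ 2 * (4 * (q * ξ - p) ^ 2 / ((1 + ξ ^ 2) * (q ^ 2 + p ^ 2))) ≤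
      1 / 2 + 8 * (q * ξ - p) ^ 2 := by
  have hQℝ : (1 : ℝ) ≤ Q := mod_cast hQ_pos
  set M : ℝ := q ^ 2 + p ^ 2
  have hM : 0 < M := by linarith
  have hQM : (Q : ℝ) ^ 2 ≤ M ^ 2 := by gcongr
  calc (Q : ℝ) ^ 2 * (4 * (q * ξ - p) ^ 2 / ((1 + ξ ^ 2) * M))
      = Q ^ 2 / M ^ 2 * (4 * (q * ξ - p) ^ 2 * M / (1 + ξ ^ 2)) := by field_simp
    _ ≤ Q ^ 2 / M ^ 2 * (4 * approxForm ξ q p ^ 2 + 8 * (q * ξ - p) ^ 2) := by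
        gcongr
        exact (div_le_iff₀ (by positivity)).2 (four_mul_sq_mul_add_sq_le herr hform)
    _ = (8 * approxForm ξ q p ^ 2 * Q ^ 2) / M ^ 2 / 2 +
          Q ^ 2 / M ^ 2 * (8 * (q * ξ - p) ^ 2) := by ring
    _ ≤ 1 / 2 + 1 * (8 * (q * ξ - p) ^ 2) := by
        gcongr
        · exact div_le_one_of_le₀ hformQ (by positivity)
        · exact div_le_one_of_le₀ hQM (by positivity)
    _ = 1 / 2 + 8 * (q * ξ - p) ^ 2 := by rw [one_mul]

theorem IsGoodApprox.approxForm_sq_le_one {q p : ℤ} (h : IsGoodApprox ξ q p) :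
    approxForm ξ q p ^ 2 ≤ 1 := by
  obtain ⟨-, hform | ⟨-, hform⟩⟩ := h <;> linarith [sq_nonneg (approxForm ξ q p)]

theorem exists_pythagorean_distToRationalPoint_lt (hξ : Irrational ξ) {ε δ : ℝ} (hε : 0 < ε)
    (hδ : 0 < δ) :
    ∃ t : ℤ × ℤ × ℤ, 1 ≤ t.1 ∧ t.2.1 ^ 2 + t.2.2 ^ 2 = t.1 ^ 2 ∧
      distToRationalPoint ((1 - ξ ^ 2) / (1 + ξ ^ 2)) (2 * ξ / (1 + ξ ^ 2)) t <
        (1 + ε) / (√2 * t.1) ∧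
      distToRationalPoint ((1 - ξ ^ 2) / (1 + ξ ^ 2)) (2 * ξ / (1 + ξ ^ 2)) t < δ := by
  obtain ⟨q, p, hgood, herr⟩ := exists_isGoodApprox_abs_lt hξ
    (δ := min 1 (min (ε / 8) (δ / 2))) (by positivity)
  obtain ⟨herr_one, herr_ε, herr_δ⟩ := by simpa only [lt_min_iff] using herr
  obtain ⟨Q, A₁, A₂, hQ, hpyth, hQM, hA₁, hA₂, hformQ⟩ := hgood.exists_pythagorean
  have hQℝ : (1 : ℝ) ≤ Q := mod_cast hQ
  have hM : (1 : ℝ) ≤ q ^ 2 + p ^ 2 := hQℝ.trans hQM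
  have hdist : distToRationalPoint ((1 - ξ ^ 2) / (1 + ξ ^ 2)) (2 * ξ / (1 + ξ ^ 2)) (Q, A₁, A₂) =
      √(4 * (q * ξ - p) ^ 2 / ((1 + ξ ^ 2) * (q ^ 2 + p ^ 2))) := by
    rw [distToRationalPoint, hA₁, hA₂, sq_dist_stereographic ξ (by positivity)]
  refine ⟨(Q, A₁, A₂), hQ, hpyth, ?_, ?_⟩
  · have herr_sq : (q * ξ - p) ^ 2 < ε / 8 := by
      rw [← sq_abs]
      nlinarith only [herr_one, herr_ε, abs_nonneg (q * ξ - p)]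
    have hbound := sq_mul_sq_dist_stereographic_le hQM hQ herr_one.le
      hgood.approxForm_sq_le_one hformQ
    rw [hdist, Real.sqrt_lt' (by positivity), div_pow, mul_pow, Real.sq_sqrt zero_le_two,
      lt_div_iff₀ (by positivity)]
    nlinarith only [hbound, herr_sq, sq_nonneg ε]
  · rw [hdist, Real.sqrt_lt' hδ]
    calc 4 * (q * ξ - p) ^ 2 / ((1 + ξ ^ 2) * (q ^ 2 + p ^ 2)) ≤ 4 * (q * ξ - p) ^ 2 :=
          div_le_self (by positivity) (one_le_mul_of_one_le_of_one_le (by nlinarith) hM)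
      _ = (2 * |q * ξ - p|) ^ 2 := by rw [mul_pow, sq_abs]; norm_num
      _ < δ ^ 2 := by gcongr; linarith

end Circle

theorem infinite_of_forall_gt_exists_mem_lt {ι α : Type*} [LinearOrder α] [NoMaxOrder α]
    {S : Set ι} {f : ι → α} {a : α} (hgt : ∀ i ∈ S, a < f i)
    (hclose : ∀ b > a, ∃ i ∈ S, f i < b) : S.Infinite := by
  intro hfin
  obtain ⟨b, hb⟩ := exists_gt a
  obtain ⟨i₀, hi₀, -⟩ := hclose b hb
  obtain ⟨i, hi, hmin⟩ := S.exists_min_image f hfin ⟨i₀, hi₀⟩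
  obtain ⟨j, hj, hlt⟩ := hclose (f i) (hgt i hi)
  exact (hmin j hj).not_gt hlt

theorem stmt_0 (α₁ α₂ : ℝ) (hsphere : α₁ ^ 2 + α₂ ^ 2 = 1)
    (hirr : ¬ (∃ r₁ r₂ : ℚ, α₁ = (r₁ : ℝ) ∧ α₂ = (r₂ : ℝ))) (ε : ℝ) (hε : 0 < ε) :
    {p : ℤ × ℤ × ℤ | 1 ≤ p.1 ∧ p.2.1 ^ 2 + p.2.2 ^ 2 = p.1 ^ 2 ∧
      Real.sqrt ((α₁ - (p.2.1 : ℝ) / (p.1 : ℝ)) ^ 2 + (α₂ - (p.2.2 : ℝ) / (p.1 : ℝ)) ^ 2)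
        < (1 + ε) / (Real.sqrt 2 * (p.1 : ℝ))}.Infinite := by
  obtain ⟨ξ, hξ, rfl, rfl⟩ := exists_irrational_stereographic hsphere hirr
  refine infinite_of_forall_gt_exists_mem_lt (fun t _ ↦ distToRationalPoint_pos hirr t)
    fun δ hδ ↦ ?_
  obtain ⟨t, hQ, hpyth, hquality, hclose⟩ :=
    exists_pythagorean_distToRationalPoint_lt hξ hε hδ
  exact ⟨t, ⟨hQ, hpyth, hquality⟩, hclose⟩
end

section
/- There exists a point (α₁, α₂) ∈ ℝ² on the unit circle (α₁² + α₂² = 1) with (α₁, α₂) ∉ ℚ², such that for every ε > 0 there are only finitely many triples (Q, A₁, A₂) of integers with Q ≥ 1, A₁² + A₂² = Q², and √((α₁ − A₁/Q)² + (α₂ − A₂/Q)²) < (1 − ε)/(√2 · Q). In other words, the constant √2 in the approximation bound (1+ε)/(√2·Q) for rational points on the circle cannot be replaced by any larger number. -/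
/-!
The witness is `(1/√2, 1/√2)`, on the diagonal. A rational point `(A₁/Q, A₂/Q)` of the unit circle
is never on the diagonal, because `2 A₁² = Q²` has no solution with `Q ≠ 0`. Hence
`|A₁ - A₂| ≥ 1`, and already the distance from the rational point to the diagonal, which is
`|A₁ - A₂| / (√2 Q)`, is at least `1 / (√2 Q)`.
-/

theorem ne_of_sq_add_sq_eq_sq {a b q : ℤ} (hq : q ≠ 0) (h : a ^ 2 + b ^ 2 = q ^ 2) : a ≠ b := by
  rintro rfl
  have two_nonsquare : Zsqrtd.Nonsquare 2 :=
    ⟨fun n hn => Nat.prime_two.prime.irreducible.not_isSquare ⟨n, hn⟩⟩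
  have q_sq : q * q = (2 : ℕ) * a * a := by
    push_cast
    linarith
  exact hq (Zsqrtd.divides_sq_eq_zero_z q_sq).1

theorem abs_sub_div_sqrt_two_le_sqrt (t x y : ℝ) :
    |x - y| / √2 ≤ √((t - x) ^ 2 + (t - y) ^ 2) := by
  apply Real.le_sqrt_of_sq_le
  calc (|x - y| / √2) ^ 2 = (x - y) ^ 2 / 2 := by
        rw [div_pow, sq_abs, Real.sq_sqrt zero_le_two]
    _ ≤ (x - y) ^ 2 / 2 + (2 * t - x - y) ^ 2 / 2 := le_add_of_nonneg_right (by positivity)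
    _ = (t - x) ^ 2 + (t - y) ^ 2 := by ring

theorem one_div_sqrt_two_mul_le_sqrt_of_ne (t : ℝ) {a b q : ℤ} (hq : 0 < q) (hab : a ≠ b) :
    1 / (√2 * q) ≤ √((t - a / q) ^ 2 + (t - b / q) ^ 2) := by
  have hq' : (0 : ℝ) < q := Int.cast_pos.2 hq
  have one_le : (1 : ℝ) ≤ |(a : ℝ) - b| := by
    exact_mod_cast Int.one_le_abs (sub_ne_zero.2 hab)
  calc 1 / (√2 * q) ≤ |(a : ℝ) - b| / (√2 * q) := by gcongr
    _ = |(a : ℝ) / q - b / q| / √2 := by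
        rw [← sub_div, abs_div, abs_of_pos hq', div_div, mul_comm]
    _ ≤ √((t - a / q) ^ 2 + (t - b / q) ^ 2) := abs_sub_div_sqrt_two_le_sqrt t _ _

theorem stmt_1 :
    ∃ α₁ α₂ : ℝ, α₁ ^ 2 + α₂ ^ 2 = 1 ∧
      ¬ (∃ r₁ r₂ : ℚ, α₁ = (r₁ : ℝ) ∧ α₂ = (r₂ : ℝ)) ∧
      ∀ ε : ℝ, 0 < ε →
        {p : ℤ × ℤ × ℤ | 1 ≤ p.1 ∧ p.2.1 ^ 2 + p.2.2 ^ 2 = p.1 ^ 2 ∧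
          Real.sqrt ((α₁ - (p.2.1 : ℝ) / (p.1 : ℝ)) ^ 2 + (α₂ - (p.2.2 : ℝ) / (p.1 : ℝ)) ^ 2)
            < (1 - ε) / (Real.sqrt 2 * (p.1 : ℝ))}.Finite := by
  refine ⟨(√2)⁻¹, (√2)⁻¹, ?_, ?_, fun ε hε => ?_⟩
  · rw [inv_pow, Real.sq_sqrt zero_le_two]
    norm_num
  · rintro ⟨r, -, hr, -⟩
    exact irrational_sqrt_two.inv.ne_rat r hr
  · refine Set.finite_empty.subset ?_
    rintro ⟨Q, A, B⟩ ⟨hQ, hcircle, hclose⟩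
    have hQ_pos : 0 < Q := hQ
    have hne : A ≠ B := ne_of_sq_add_sq_eq_sq hQ_pos.ne' hcircle
    refine hclose.not_ge ?_
    calc (1 - ε) / (√2 * Q) ≤ 1 / (√2 * Q) := by
          gcongr
          exact sub_le_self 1 hε.le
      _ ≤ √(((√2)⁻¹ - A / Q) ^ 2 + ((√2)⁻¹ - B / Q) ^ 2) :=
          one_div_sqrt_two_mul_le_sqrt_of_ne _ hQ_pos hne
end

section
/- Let β₁, β₂ ∈ ℝ and T ≥ 1. Then there exist integers q, b₁, b₂ with: (i) 1 ≤ q ≤ T; (ii) (qβ₁ − b₁)² + (qβ₂ − b₂)² < 4q/T; (iii) q divides b₁² + b₂². -/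
/-!
Put `β = β₁ + β₂ i`. Minkowski's convex body theorem, applied in `ℂ × ℂ` to the body
`‖w‖ ≤ R`, `‖β w - z‖ ≤ 4 / (π R)`, whose volume is `16 = 2 ^ 4` because the shear
`(w, z) ↦ (w, β w - z)` preserves volume, yields Gaussian integers `w` and `z`, not both
zero. If `4 / (π R) < 1` then `w ≠ 0`; otherwise `w = 1` and the nearest `z` to `β` will do. With
`q = |w|²` and `b = conj w * z` one has `q β - b = conj w * (β w - z)`, so
`|q β - b|² = q |β w - z|²`, and `q` divides `|b|² = q |z|²`. Taking `R = √T` gives the theorem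
with `4` improved to `(4 / π)²`.
-/

open Module MeasureTheory Submodule
open scoped ComplexConjugate

theorem fundamentalDomain_prod {𝕜 E F ι κ : Type*} [NormedField 𝕜] [LinearOrder 𝕜]
    [NormedAddCommGroup E] [NormedSpace 𝕜 E] [NormedAddCommGroup F] [NormedSpace 𝕜 F]
    (b : Basis ι 𝕜 E) (c : Basis κ 𝕜 F) :
    ZSpan.fundamentalDomain (b.prod c) =
      ZSpan.fundamentalDomain b ×ˢ ZSpan.fundamentalDomain c := by
  ext x
  simp [Sum.forall]

theorem mem_span_range_prod_iff {R S M N ι κ : Type*} [CommRing R] [Ring S]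
    [Nontrivial S] [Algebra R S] [IsDomain R] [IsTorsionFree R S]
    [AddCommGroup M] [Module R M] [Module S M] [IsScalarTower R S M]
    [AddCommGroup N] [Module R N] [Module S N] [IsScalarTower R S N]
    (b : Basis ι S M) (c : Basis κ S N) {x : M × N} :
    x ∈ span R (Set.range (b.prod c)) ↔
      x.1 ∈ span R (Set.range b) ∧ x.2 ∈ span R (Set.range c) := by
  simp [Basis.mem_span_iff_repr_mem, Sum.forall]

theorem measurePreserving_prodMk_fst_sub_snd {α G : Type*} [MeasurableSpace α] [AddGroup G]
    [MeasurableSpace G] [MeasurableAdd₂ G] [MeasurableNeg G]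
    {f : α → G} (hf : Measurable f) (μ : Measure α) [SFinite μ] (ν : Measure G) [SFinite ν]
    [ν.IsAddLeftInvariant] [ν.IsNegInvariant] :
    MeasurePreserving (fun p : α × G ↦ (p.1, f p.1 - p.2)) (μ.prod ν) (μ.prod ν) :=
  (MeasurePreserving.id μ).skew_product (g := fun x y ↦ f x - y)
    ((hf.comp measurable_fst).sub measurable_snd)
    (ae_of_all _ fun x ↦ (ν.measurePreserving_sub_left (f x)).map_eq)

theorem exists_ne_zero_mem_span_map_sub_mem {E F ι κ : Type*} [Finite ι] [Finite κ]
    [NormedAddCommGroup E] [NormedSpace ℝ E] [Nontrivial E] [MeasurableSpace E] [BorelSpace E]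
    [NormedAddCommGroup F] [NormedSpace ℝ F] [MeasurableSpace F] [BorelSpace F]
    (b : Basis ι ℝ E) (c : Basis κ ℝ F)
    (μ : Measure E) [μ.IsAddHaarMeasure] (ν : Measure F) [ν.IsAddHaarMeasure]
    (A : E →ₗ[ℝ] F) {K : Set E} {L : Set F}
    (hK_symm : ∀ x ∈ K, -x ∈ K) (hK_conv : Convex ℝ K) (hK : IsCompact K)
    (hL_symm : ∀ y ∈ L, -y ∈ L) (hL_conv : Convex ℝ L) (hL : IsCompact L)
    (h : μ (ZSpan.fundamentalDomain b) * ν (ZSpan.fundamentalDomain c) *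
      2 ^ (finrank ℝ E + finrank ℝ F) ≤ μ K * ν L) :
    ∃ w ∈ span ℤ (Set.range b), ∃ z ∈ span ℤ (Set.range c),
      (w, z) ≠ 0 ∧ w ∈ K ∧ A w - z ∈ L := by
  have : FiniteDimensional ℝ E := b.finiteDimensional_of_finite
  have : FiniteDimensional ℝ F := c.finiteDimensional_of_finite
  have : Countable (span ℤ (Set.range (b.prod c))).toAddSubgroup :=
    inferInstanceAs (Countable (span ℤ (Set.range (b.prod c))))
  have : DiscreteTopology (span ℤ (Set.range (b.prod c))).toAddSubgroup :=
    inferInstanceAs (DiscreteTopology (span ℤ (Set.range (b.prod c))))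
  let shear : (E × F) ≃ₗ[ℝ] E × F :=
    (LinearEquiv.refl ℝ E).skewProd (LinearEquiv.neg ℝ) A
  have shear_apply (p : E × F) : shear p = (p.1, A p.1 - p.2) := by
    simp [shear, sub_eq_neg_add]
  have shear_measurePreserving : MeasurePreserving shear (μ.prod ν) (μ.prod ν) := by
    simpa only [← shear_apply] using measurePreserving_prodMk_fst_sub_snd
      A.continuous_of_finiteDimensional.measurable μ ν
  have hvol : (μ.prod ν) (shear ⁻¹' K ×ˢ L) = μ K * ν L := by
    rw [shear_measurePreserving.measure_preimage
      (hK.measurableSet.prod hL.measurableSet).nullMeasurableSet, Measure.prod_prod]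
  obtain ⟨⟨x, hx⟩, hx0, hxK⟩ := exists_ne_zero_mem_lattice_of_measure_mul_two_pow_le_measure
    (s := shear ⁻¹' K ×ˢ L) (ZSpan.isAddFundamentalDomain' (b.prod c) (μ.prod ν))
    (fun x hx ↦ by
      rw [Set.mem_preimage, map_neg]
      exact ⟨hK_symm _ hx.1, hL_symm _ hx.2⟩)
    ((hK_conv.prod hL_conv).linear_preimage shear.toLinearMap)
    (shear.toContinuousLinearEquiv.toHomeomorph.isCompact_preimage.2 (hK.prod hL))
    (by rwa [hvol, fundamentalDomain_prod, Measure.prod_prod, finrank_prod])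
  obtain ⟨hw, hz⟩ := (mem_span_range_prod_iff b c).1 hx
  rw [Set.mem_preimage, shear_apply] at hxK
  exact ⟨x.1, hw, x.2, hz, fun h0 ↦ hx0 (Subtype.ext h0), hxK⟩

theorem volume_fundamentalDomain_orthonormalBasis {ι E : Type*} [Fintype ι]
    [NormedAddCommGroup E] [InnerProductSpace ℝ E] [FiniteDimensional ℝ E] [MeasurableSpace E]
    [BorelSpace E] (b : OrthonormalBasis ι ℝ E) :
    volume (ZSpan.fundamentalDomain b.toBasis) = 1 := by
  rw [measure_congr (ZSpan.fundamentalDomain_ae_parallelepiped b.toBasis volume),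
    b.coe_toBasis, b.volume_parallelepiped]

theorem mem_span_int_range_basisOneI_iff {x : ℂ} :
    x ∈ span ℤ (Set.range Complex.basisOneI) ↔ ∃ w : GaussianInt, (w : ℂ) = x := by
  simp only [Basis.mem_span_iff_repr_mem, Fin.forall_fin_two, Complex.coe_basisOneI_repr]
  constructor
  · rintro ⟨⟨m, hm⟩, ⟨n, hn⟩⟩
    exact ⟨⟨m, n⟩, Complex.ext (by simpa using hm) (by simpa using hn)⟩
  · rintro ⟨w, rfl⟩
    exact ⟨⟨w.re, by simp⟩, ⟨w.im, by simp⟩⟩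

theorem volume_closedBall_mul_volume_closedBall (a b : ℂ) {r s : ℝ} (hr : 0 ≤ r) (hs : 0 ≤ s) :
    volume (Metric.closedBall a r) * volume (Metric.closedBall b s) =
      ENNReal.ofReal ((Real.pi * (r * s)) ^ 2) := by
  rw [Complex.volume_closedBall, Complex.volume_closedBall, ENNReal.ofReal_pow (by positivity),
    ENNReal.ofReal_mul Real.pi_nonneg, ENNReal.ofReal_mul hr, ← NNReal.coe_real_pi,
    ENNReal.ofReal_coe_nnreal]
  ring

theorem exists_gaussianInt_pair_ne_zero_norm_mul_sub_le (β : ℂ) {R δ : ℝ}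
    (hR : 0 ≤ R) (h : 4 ≤ Real.pi * (R * δ)) :
    ∃ w z : GaussianInt, (w, z) ≠ 0 ∧ ‖(w : ℂ)‖ ≤ R ∧ ‖β * w - z‖ ≤ δ := by
  have hRδ : 0 < R * δ := pos_of_mul_pos_right (by linarith) Real.pi_nonneg
  have hδ : 0 ≤ δ := (pos_of_mul_pos_right hRδ hR).le
  have hdomain : volume (ZSpan.fundamentalDomain Complex.basisOneI) = 1 := by
    rw [← Complex.toBasis_orthonormalBasisOneI, volume_fundamentalDomain_orthonormalBasis]
  have hvol : (2 : ENNReal) ^ (2 + 2) ≤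
      volume (Metric.closedBall (0 : ℂ) R) * volume (Metric.closedBall (0 : ℂ) δ) :=
    calc (2 : ENNReal) ^ (2 + 2) = ENNReal.ofReal (4 ^ 2) := by norm_num
      _ ≤ ENNReal.ofReal ((Real.pi * (R * δ)) ^ 2) := by gcongr
      _ = _ := (volume_closedBall_mul_volume_closedBall 0 0 hR hδ).symm
  obtain ⟨x, hx, y, hy, hxy, hxR, hxyδ⟩ := exists_ne_zero_mem_span_map_sub_mem
    Complex.basisOneI Complex.basisOneI volume volume (LinearMap.mulLeft ℝ β)
    (by simp) (convex_closedBall 0 R) (isCompact_closedBall 0 R)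
    (by simp) (convex_closedBall 0 δ) (isCompact_closedBall 0 δ)
    (by simpa only [hdomain, one_mul, Complex.finrank_real_complex] using hvol)
  obtain ⟨w, rfl⟩ := mem_span_int_range_basisOneI_iff.1 hx
  obtain ⟨z, rfl⟩ := mem_span_int_range_basisOneI_iff.1 hy
  refine ⟨w, z, ?_, by simpa using hxR, by simpa using hxyδ⟩
  simpa using hxy

theorem eq_zero_of_norm_toComplex_lt_one {z : GaussianInt} (hz : ‖(z : ℂ)‖ < 1) : z = 0 := by
  have hnorm : (z.norm : ℝ) < 1 := by
    rw [GaussianInt.intCast_real_norm, Complex.normSq_eq_norm_sq]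
    exact pow_lt_one₀ (norm_nonneg _) hz two_ne_zero
  have : z.norm < 1 := by exact_mod_cast hnorm
  exact GaussianInt.norm_eq_zero.1 (by linarith [GaussianInt.norm_nonneg z])

theorem exists_gaussianInt_norm_sub_le_one (β : ℂ) : ∃ z : GaussianInt, ‖β - z‖ ≤ 1 := by
  refine ⟨⟨round β.re, round β.im⟩, (Complex.norm_le_abs_re_add_abs_im _).trans ?_⟩
  have hre := abs_sub_round β.re
  have him := abs_sub_round β.im
  rw [Complex.sub_re, Complex.sub_im, GaussianInt.re_toComplex, GaussianInt.im_toComplex]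
  linarith

theorem exists_gaussianInt_ne_zero_norm_mul_sub_le (β : ℂ) {R : ℝ} (hR : 1 ≤ R) :
    ∃ w z : GaussianInt, w ≠ 0 ∧ ‖(w : ℂ)‖ ≤ R ∧ ‖β * w - z‖ ≤ 4 / (Real.pi * R) := by
  have hπR : 0 < Real.pi * R := by positivity
  rcases le_or_gt 1 (4 / (Real.pi * R)) with hδ | hδ
  · obtain ⟨z, hz⟩ := exists_gaussianInt_norm_sub_le_one β
    exact ⟨1, z, one_ne_zero, by simpa using hR, by simpa using hz.trans hδ⟩
  · obtain ⟨w, z, hne, hw, hwz⟩ := exists_gaussianInt_pair_ne_zero_norm_mul_sub_le β (R := R)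
      (δ := 4 / (Real.pi * R)) (by positivity)
      (by rw [← mul_assoc, mul_div_cancel₀ _ hπR.ne'])
    refine ⟨w, z, ?_, hw, hwz⟩
    rintro rfl
    have hz : z = 0 := eq_zero_of_norm_toComplex_lt_one (by simpa using hwz.trans_lt hδ)
    exact hne (by simp [hz])

theorem intCast_norm_mul_sub_star_mul (β : ℂ) (w z : GaussianInt) :
    (w.norm : ℂ) * β - (star w * z : GaussianInt) = conj (w : ℂ) * (β * w - z) := by
  rw [GaussianInt.intCast_complex_norm, Complex.normSq_eq_conj_mul_self,
    GaussianInt.toComplex_mul, GaussianInt.toComplex_star]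
  ring

theorem normSq_intCast_norm_mul_sub_star_mul (β : ℂ) (w z : GaussianInt) :
    Complex.normSq ((w.norm : ℂ) * β - (star w * z : GaussianInt)) =
      w.norm * Complex.normSq (β * w - z) := by
  rw [intCast_norm_mul_sub_star_mul, Complex.normSq_mul, Complex.normSq_conj,
    GaussianInt.intCast_real_norm]

theorem norm_dvd_re_sq_add_im_sq_star_mul (w z : GaussianInt) :
    w.norm ∣ (star w * z).re ^ 2 + (star w * z).im ^ 2 := by
  have hnorm : (star w * z).re ^ 2 + (star w * z).im ^ 2 = w.norm * z.norm := by
    rw [← Zsqrtd.norm_conj w, ← Zsqrtd.norm_mul, Zsqrtd.norm_def]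
    ring
  exact hnorm ▸ dvd_mul_right _ _

theorem stmt_2_general (β₁ β₂ : ℝ) (T : ℝ) (hT : 1 ≤ T) :
    ∃ q b₁ b₂ : ℤ, 1 ≤ q ∧ (q : ℝ) ≤ T ∧
      ((q : ℝ) * β₁ - (b₁ : ℝ)) ^ 2 + ((q : ℝ) * β₂ - (b₂ : ℝ)) ^ 2 ≤
        (4 / Real.pi) ^ 2 * (q : ℝ) / T ∧
      q ∣ b₁ ^ 2 + b₂ ^ 2 := by
  obtain ⟨w, z, hw0, hw, hwz⟩ :=
    exists_gaussianInt_ne_zero_norm_mul_sub_le ⟨β₁, β₂⟩ (Real.one_le_sqrt.2 hT)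
  refine ⟨w.norm, (star w * z).re, (star w * z).im, GaussianInt.norm_pos.2 hw0, ?_, ?_,
    norm_dvd_re_sq_add_im_sq_star_mul w z⟩
  · rw [GaussianInt.intCast_real_norm, Complex.normSq_eq_norm_sq]
    exact (Real.le_sqrt (norm_nonneg _) (by linarith)).1 hw
  · calc _ = Complex.normSq ((w.norm : ℂ) * ⟨β₁, β₂⟩ - (star w * z : GaussianInt)) := by
          simp [Complex.normSq_apply, sq]
      _ = w.norm * ‖(⟨β₁, β₂⟩ : ℂ) * w - z‖ ^ 2 := by
          rw [normSq_intCast_norm_mul_sub_star_mul, Complex.normSq_eq_norm_sq]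
      _ ≤ w.norm * (4 / (Real.pi * √T)) ^ 2 := by
          gcongr
          exact_mod_cast GaussianInt.norm_nonneg w
      _ = (4 / Real.pi) ^ 2 * w.norm / T := by
          rw [← div_div, div_pow _ √T, Real.sq_sqrt (by linarith)]
          ring

theorem stmt_2 (β₁ β₂ : ℝ) (T : ℝ) (hT : 1 ≤ T) :
    ∃ q b₁ b₂ : ℤ, 1 ≤ q ∧ (q : ℝ) ≤ T ∧
      ((q : ℝ) * β₁ - (b₁ : ℝ)) ^ 2 + ((q : ℝ) * β₂ - (b₂ : ℝ)) ^ 2 < 4 * (q : ℝ) / T ∧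
      q ∣ b₁ ^ 2 + b₂ ^ 2 := by
  obtain ⟨q, b₁, b₂, hq, hqT, hb, hdvd⟩ := stmt_2_general β₁ β₂ T hT
  refine ⟨q, b₁, b₂, hq, hqT, hb.trans_lt ?_, hdvd⟩
  have hconst : (4 / Real.pi) ^ 2 < 4 := by
    rw [div_pow, div_lt_iff₀ (by positivity)]
    nlinarith [Real.pi_gt_three]
  gcongr
end

section
/- Let γ > √(3/π) and let β₁, β₂ ∈ ℝ with at least one of β₁, β₂ irrational. Then there exist infinitely many triples (q, b₁, b₂) of integers with q ≥ 1, q dividing b₁² + b₂², and (qβ₁ − b₁)² + (qβ₂ − b₂)² < γ². -/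
/-!
Fix `β ∈ ℂ` and `s > 0`. The vectors `(s y, (yβ - x) / s)` with `x, y ∈ ℤ[i]` form a lattice in
`ℂ²` whose basis has Gram determinant `1`. Since every complex number lies within distance `1 / √2`
of a Gaussian integer, Hermite reduction gives coprime `x, y` whose vector has length at most
`2 ^ (1/4)`. By AM-GM, `‖y‖ ‖yβ - x‖ ≤ 1 / √2`, while `‖yβ - x‖ < 2 s` is as small as we please.

Multiplying `yβ - x` by the conjugate of `y` gives `qβ - b` with `q = ‖y‖²` and `b = x ȳ`, so
`q ∣ ‖b‖²` and `‖qβ - b‖² ≤ 1 / 2`. If `β ∉ ℚ(i)`, then `‖qβ - b‖² / q = ‖yβ - x‖²` is never zero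
but takes arbitrarily small values, hence infinitely many `(q, b)` occur.
-/

section GramDet

variable (𝕜 : Type*) {E : Type*} [RCLike 𝕜] [SeminormedAddCommGroup E] [InnerProductSpace 𝕜 E]

/-- The determinant of the Gram matrix of two vectors, as a real number: the squared covolume of the
lattice they span. -/
noncomputable def gramDet (u v : E) : ℝ :=
  ‖u‖ ^ 2 * ‖v‖ ^ 2 - ‖inner 𝕜 u v‖ ^ 2

theorem ofReal_gramDet (u v : E) :
    (gramDet 𝕜 u v : 𝕜) = inner 𝕜 u u * inner 𝕜 v v - inner 𝕜 u v * inner 𝕜 v u := by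
  rw [inner_self_eq_norm_sq_to_K, inner_self_eq_norm_sq_to_K, ← inner_conj_symm v u,
    RCLike.mul_conj, gramDet]
  push_cast
  rfl

variable {𝕜}

theorem gramDet_smul_add_smul (u v : E) (a b c d : 𝕜) :
    gramDet 𝕜 (a • u + b • v) (c • u + d • v) = ‖a * d - b * c‖ ^ 2 * gramDet 𝕜 u v := by
  apply RCLike.ofReal_injective (K := 𝕜)
  rw [RCLike.ofReal_mul, RCLike.ofReal_pow, ofReal_gramDet, ofReal_gramDet, ← RCLike.mul_conj]
  simp only [inner_add_left, inner_add_right, inner_smul_left, inner_smul_right, map_sub, map_mul]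
  ring

theorem gramDet_le_norm_sq_mul_norm_sq (u v : E) : gramDet 𝕜 u v ≤ ‖u‖ ^ 2 * ‖v‖ ^ 2 :=
  sub_le_self _ (sq_nonneg _)

theorem norm_sq_mul_gramDet_le_left (u v : E) (a b : 𝕜) :
    ‖a‖ ^ 2 * gramDet 𝕜 u v ≤ ‖v‖ ^ 2 * ‖a • u + b • v‖ ^ 2 := by
  have h := gramDet_le_norm_sq_mul_norm_sq (𝕜 := 𝕜) ((0 : 𝕜) • u + (1 : 𝕜) • v) (a • u + b • v)
  rw [gramDet_smul_add_smul] at h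
  simpa using h

theorem norm_sq_mul_gramDet_le_right (u v : E) (a b : 𝕜) :
    ‖b‖ ^ 2 * gramDet 𝕜 u v ≤ ‖u‖ ^ 2 * ‖a • u + b • v‖ ^ 2 := by
  have h := gramDet_le_norm_sq_mul_norm_sq (𝕜 := 𝕜) ((1 : 𝕜) • u + (0 : 𝕜) • v) (a • u + b • v)
  rw [gramDet_smul_add_smul] at h
  simpa using h

end GramDet

theorem norm_gaussianInt_sq (x : GaussianInt) : ‖(x : ℂ)‖ ^ 2 = x.norm := by
  rw [Complex.sq_norm, GaussianInt.intCast_real_norm]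

theorem one_le_norm_gaussianInt {x : GaussianInt} (hx : x ≠ 0) : 1 ≤ ‖(x : ℂ)‖ := by
  have hnorm : 1 ≤ x.norm := GaussianInt.norm_pos.2 hx
  rw [← one_le_sq_iff₀ (norm_nonneg _), norm_gaussianInt_sq]
  exact_mod_cast hnorm

theorem exists_gaussianInt_norm_sub_sq_le (z : ℂ) : ∃ k : GaussianInt, ‖z - k‖ ^ 2 ≤ 1 / 2 := by
  refine ⟨⟨round z.re, round z.im⟩, ?_⟩
  have hre := sq_le_sq' (neg_le_of_abs_le (abs_sub_round z.re)) (le_of_abs_le (abs_sub_round z.re))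
  have him := sq_le_sq' (neg_le_of_abs_le (abs_sub_round z.im)) (le_of_abs_le (abs_sub_round z.im))
  rw [Complex.sq_norm, Complex.normSq_apply]
  simp only [Complex.sub_re, Complex.sub_im, GaussianInt.re_toComplex, GaussianInt.im_toComplex]
  linarith

theorem finite_setOf_norm_gaussianInt_le (R : ℝ) : {x : GaussianInt | ‖(x : ℂ)‖ ≤ R}.Finite := by
  have hball : (Metric.closedBall (0 : ℤ) R).Finite :=
    (isCompact_closedBall 0 R).finite_of_discrete
  refine Set.Finite.of_injOn (f := fun x : GaussianInt => (x.re, x.im)) ?_ ?_ (hball.prod hball)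
  · intro x hx
    simp only [Set.mem_prod, mem_closedBall_zero_iff, Int.norm_eq_abs]
    rw [GaussianInt.intCast_re, GaussianInt.intCast_im]
    exact ⟨(Complex.abs_re_le_norm _).trans hx, (Complex.abs_im_le_norm _).trans hx⟩
  · intro x _ y _ hxy
    exact Zsqrtd.ext (congrArg Prod.fst hxy) (congrArg Prod.snd hxy)

section HermiteReduction

variable {E : Type*} [SeminormedAddCommGroup E] [InnerProductSpace ℂ E] {u v : E}

theorem finite_setOf_norm_gaussianInt_combination_le (huv : 0 < gramDet ℂ u v) (R : ℝ) :
    {p : GaussianInt × GaussianInt | ‖(p.1 : ℂ) • u + (p.2 : ℂ) • v‖ ≤ R}.Finite := by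
  refine ((finite_setOf_norm_gaussianInt_le √(‖v‖ ^ 2 * R ^ 2 / gramDet ℂ u v)).prod
    (finite_setOf_norm_gaussianInt_le √(‖u‖ ^ 2 * R ^ 2 / gramDet ℂ u v))).subset ?_
  rintro ⟨x, y⟩ (hR : ‖(x : ℂ) • u + (y : ℂ) • v‖ ≤ R)
  constructor <;> apply Real.le_sqrt_of_sq_le <;> rw [le_div_iff₀ huv]
  · exact (norm_sq_mul_gramDet_le_left u v _ _).trans (by gcongr)
  · exact (norm_sq_mul_gramDet_le_right u v _ _).trans (by gcongr)

theorem exists_isCoprime_norm_minimal (huv : 0 < gramDet ℂ u v) :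
    ∃ x y : GaussianInt, IsCoprime x y ∧ ∀ x' y' : GaussianInt, IsCoprime x' y' →
      ‖(x : ℂ) • u + (y : ℂ) • v‖ ≤ ‖(x' : ℂ) • u + (y' : ℂ) • v‖ := by
  let length (p : GaussianInt × GaussianInt) : ℝ := ‖(p.1 : ℂ) • u + (p.2 : ℂ) • v‖
  let short := {p | IsCoprime p.1 p.2 ∧ length p ≤ length (1, 0)}
  have hfinite : short.Finite :=
    (finite_setOf_norm_gaussianInt_combination_le huv _).subset fun p hp => hp.2
  obtain ⟨⟨x, y⟩, ⟨hcoprime, hle⟩, hmin⟩ :=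
    Set.exists_min_image short length hfinite ⟨(1, 0), isCoprime_one_left, le_rfl⟩
  refine ⟨x, y, hcoprime, fun x' y' hcoprime' => ?_⟩
  rcases le_total (length (x', y')) (length (1, 0)) with hshort | hlong
  · exact hmin (x', y') ⟨hcoprime', hshort⟩
  · exact hle.trans hlong

theorem exists_gaussianInt_norm_inner_sub_smul_sq_le (w z : E) :
    ∃ k : GaussianInt, ‖inner ℂ w (z - (k : ℂ) • w)‖ ^ 2 ≤ ‖w‖ ^ 4 / 2 := by
  obtain ⟨k, hk⟩ := exists_gaussianInt_norm_sub_sq_le (inner ℂ w z / (‖w‖ : ℂ) ^ 2)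
  refine ⟨k, ?_⟩
  have hfactor : inner ℂ w (z - (k : ℂ) • w) =
      (‖w‖ : ℂ) ^ 2 * (inner ℂ w z / (‖w‖ : ℂ) ^ 2 - k) := by
    have hcancel : (‖w‖ : ℂ) ^ 2 * (inner ℂ w z / (‖w‖ : ℂ) ^ 2) = inner ℂ w z := by
      refine mul_div_cancel_of_imp' fun hw => ?_
      have hw : ‖w‖ = 0 := by exact_mod_cast pow_eq_zero_iff two_ne_zero |>.1 hw
      simpa [hw] using norm_inner_le_norm (𝕜 := ℂ) w z
    rw [inner_sub_right, inner_smul_right, inner_self_eq_norm_sq_to_K, mul_sub, hcancel]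
    simp [mul_comm]
  calc ‖inner ℂ w (z - (k : ℂ) • w)‖ ^ 2
      = ‖w‖ ^ 4 * ‖inner ℂ w z / (‖w‖ : ℂ) ^ 2 - k‖ ^ 2 := by
        rw [hfactor, norm_mul, norm_pow, Complex.norm_real, norm_norm]
        ring
    _ ≤ ‖w‖ ^ 4 * (1 / 2) := by gcongr
    _ = ‖w‖ ^ 4 / 2 := by ring

theorem exists_isCoprime_norm_pow_four_le (huv : 0 < gramDet ℂ u v) :
    ∃ x y : GaussianInt, IsCoprime x y ∧
      ‖(x : ℂ) • u + (y : ℂ) • v‖ ^ 4 ≤ 2 * gramDet ℂ u v := by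
  obtain ⟨x, y, hcoprime, hmin⟩ := exists_isCoprime_norm_minimal huv
  refine ⟨x, y, hcoprime, ?_⟩
  obtain ⟨a, b, hbezout⟩ := hcoprime
  set w : E := (x : ℂ) • u + (y : ℂ) • v
  obtain ⟨k, hk⟩ := exists_gaussianInt_norm_inner_sub_smul_sq_le w ((-b : ℂ) • u + (a : ℂ) • v)
  set z : E := (-b : ℂ) • u + (a : ℂ) • v - (k : ℂ) • w
  have hz : z = ((-b - k * x : GaussianInt) : ℂ) • u + ((a - k * y : GaussianInt) : ℂ) • v := by
    simp only [z, w, map_sub, map_mul, map_neg]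
    module
  have hwz : ‖w‖ ≤ ‖z‖ := hz ▸ hmin _ _ ⟨-y, x, by linear_combination hbezout⟩
  have hunimodular : x * (a - k * y) - y * (-b - k * x) = 1 := by linear_combination hbezout
  have hgram : gramDet ℂ w z = gramDet ℂ u v := by
    rw [hz, gramDet_smul_add_smul, ← map_mul, ← map_mul, ← map_sub, hunimodular]
    simp
  have hle : ‖w‖ ^ 4 ≤ gramDet ℂ u v + ‖w‖ ^ 4 / 2 :=
    calc ‖w‖ ^ 4 = ‖w‖ ^ 2 * ‖w‖ ^ 2 := by ring
      _ ≤ ‖w‖ ^ 2 * ‖z‖ ^ 2 := by gcongr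
      _ = gramDet ℂ u v + ‖inner ℂ w z‖ ^ 2 := by rw [← hgram, gramDet]; ring
      _ ≤ gramDet ℂ u v + ‖w‖ ^ 4 / 2 := by gcongr
  linarith

end HermiteReduction

theorem exists_isCoprime_norm_mul_sub_le (β : ℂ) {s : ℝ} (hs : 0 < s) :
    ∃ x y : GaussianInt, IsCoprime x y ∧
      ((s * ‖(y : ℂ)‖) ^ 2 + (‖(y : ℂ) * β - x‖ / s) ^ 2) ^ 2 ≤ 2 := by
  let u : EuclideanSpace ℂ (Fin 2) := !₂[0, -1 / s]
  let v : EuclideanSpace ℂ (Fin 2) := !₂[s, β / s]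
  have hgram : gramDet ℂ u v = 1 := by
    have hu : ‖u‖ ^ 2 = 1 / s ^ 2 := by simp [EuclideanSpace.norm_sq_eq, u]
    have hv : ‖v‖ ^ 2 = s ^ 2 + ‖β‖ ^ 2 / s ^ 2 := by
      simp [EuclideanSpace.norm_sq_eq, v, div_pow]
    have huv : ‖inner ℂ u v‖ = ‖β‖ / s ^ 2 := by
      simp [PiLp.inner_apply, u, v, abs_of_pos hs, sq, div_eq_mul_inv, mul_assoc]
    rw [gramDet, hu, hv, huv]
    field_simp
    ring
  obtain ⟨x, y, hcoprime, hle⟩ := exists_isCoprime_norm_pow_four_le (hgram ▸ one_pos)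
  refine ⟨x, y, hcoprime, ?_⟩
  have hnorm : ‖(x : ℂ) • u + (y : ℂ) • v‖ ^ 2 =
      (s * ‖(y : ℂ)‖) ^ 2 + (‖(y : ℂ) * β - x‖ / s) ^ 2 := by
    have hsnd : (x : ℂ) * (-1 / s) + y * (β / s) = (y * β - x) / s := by ring
    rw [EuclideanSpace.norm_sq_eq, Fin.sum_univ_two]
    simp [u, v, hsnd, abs_of_pos hs, mul_comm s]
  rw [← hnorm, ← pow_mul]
  simpa [hgram] using hle

theorem exists_gaussianInt_approximation (β : ℂ) {δ : ℝ} (hδ : 0 < δ) :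
    ∃ x y : GaussianInt, y ≠ 0 ∧ ‖(y : ℂ)‖ ^ 2 * ‖(y : ℂ) * β - x‖ ^ 2 ≤ 1 / 2 ∧
      ‖(y : ℂ) * β - x‖ < δ := by
  obtain ⟨s, hs, hsδ⟩ : ∃ s > 0, 2 * s = min δ 1 := ⟨min δ 1 / 2, by positivity, by ring⟩
  obtain ⟨x, y, hcoprime, hle⟩ := exists_isCoprime_norm_mul_sub_le β hs
  set A : ℝ := s * ‖(y : ℂ)‖ with hA
  set B : ℝ := ‖(y : ℂ) * β - x‖ / s with hB
  have herror : ‖(y : ℂ) * β - x‖ = B * s := by rw [hB, div_mul_cancel₀ _ hs.ne']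
  have hsmall : ‖(y : ℂ) * β - x‖ < min δ 1 := by
    have hAB : A ^ 2 + B ^ 2 < 2 := by nlinarith
    have hB2 : B < 2 := by nlinarith [sq_nonneg A]
    rw [herror, ← hsδ]
    gcongr
  refine ⟨x, y, ?_, ?_, hsmall.trans_le (min_le_left _ _)⟩
  · rintro rfl
    have hx : x ≠ 0 := fun hx => not_isCoprime_zero_zero (hx ▸ hcoprime)
    have hlt : ‖(x : ℂ)‖ < 1 := by simpa using hsmall.trans_le (min_le_right _ _)
    exact hlt.not_ge (one_le_norm_gaussianInt hx)
  · calc ‖(y : ℂ)‖ ^ 2 * ‖(y : ℂ) * β - x‖ ^ 2 = 4 * A ^ 2 * B ^ 2 / 4 := by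
          rw [herror, hA]; ring
      _ ≤ (A ^ 2 + B ^ 2) ^ 2 / 4 := by gcongr; exact four_mul_le_sq_add _ _
      _ ≤ 2 / 4 := by gcongr
      _ = 1 / 2 := by norm_num

theorem infinite_of_forall_pos_of_forall_exists_lt {α : Type*} {S : Set α} (f : α → ℝ)
    (hpos : ∀ a ∈ S, 0 < f a) (hlt : ∀ ε > 0, ∃ a ∈ S, f a < ε) : S.Infinite := by
  intro hfinite
  obtain ⟨a₀, ha₀, -⟩ := hlt 1 one_pos
  obtain ⟨a, ha, hmin⟩ := Set.exists_min_image S f hfinite ⟨a₀, ha₀⟩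
  obtain ⟨b, hb, hba⟩ := hlt (f a) (hpos a ha)
  exact hba.not_ge (hmin b hb)

theorem sq_add_sq_pos_of_not_both_rational {β₁ β₂ : ℝ}
    (hirr : ¬ ∃ r₁ r₂ : ℚ, β₁ = r₁ ∧ β₂ = r₂) {q : ℤ} (hq : q ≠ 0) (b₁ b₂ : ℤ) :
    0 < (q * β₁ - b₁) ^ 2 + (q * β₂ - b₂) ^ 2 := by
  have hq : (q : ℝ) ≠ 0 := by exact_mod_cast hq
  refine lt_of_le_of_ne' (by positivity) fun hzero => hirr ⟨b₁ / q, b₂ / q, ?_⟩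
  obtain ⟨h₁, h₂⟩ := (add_eq_zero_iff_of_nonneg (sq_nonneg _) (sq_nonneg _)).1 hzero
  rw [sq_eq_zero_iff, sub_eq_zero] at h₁ h₂
  push_cast
  exact ⟨eq_div_of_mul_eq hq (by rw [mul_comm, h₁]), eq_div_of_mul_eq hq (by rw [mul_comm, h₂])⟩

theorem norm_dvd_re_sq_add_im_sq_mul_star (x y : GaussianInt) :
    y.norm ∣ (x * star y).re ^ 2 + (x * star y).im ^ 2 := by
  have hnorm : (x * star y).re ^ 2 + (x * star y).im ^ 2 = (x * star y).norm := by
    rw [Zsqrtd.norm_def]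
    ring
  rw [hnorm, Zsqrtd.norm_mul, Zsqrtd.norm_conj]
  exact dvd_mul_left _ _

theorem norm_mul_re_sub_sq_add_norm_mul_im_sub_sq (β : ℂ) (x y : GaussianInt) :
    (y.norm * β.re - (x * star y).re) ^ 2 + (y.norm * β.im - (x * star y).im) ^ 2 =
      ‖(y : ℂ)‖ ^ 2 * ‖(y : ℂ) * β - x‖ ^ 2 := by
  have hfactor : (y.norm : ℂ) * β - (x * star y : GaussianInt) =
      (starRingEnd ℂ) y * (y * β - x) := by
    rw [GaussianInt.intCast_complex_norm, ← Complex.mul_conj, GaussianInt.toComplex_mul,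
      GaussianInt.toComplex_star]
    ring
  calc (y.norm * β.re - (x * star y).re) ^ 2 + (y.norm * β.im - (x * star y).im) ^ 2
      = ‖(y.norm : ℂ) * β - (x * star y : GaussianInt)‖ ^ 2 := by
        rw [Complex.sq_norm, Complex.normSq_apply, Complex.sub_re, Complex.sub_im,
          ← GaussianInt.intCast_re, ← GaussianInt.intCast_im, ← Complex.ofReal_intCast,
          Complex.re_ofReal_mul, Complex.im_ofReal_mul]
        ring
    _ = ‖(y : ℂ)‖ ^ 2 * ‖(y : ℂ) * β - x‖ ^ 2 := by
        rw [hfactor, norm_mul, RCLike.norm_conj, mul_pow]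

theorem stmt_3_general (β₁ β₂ : ℝ) (hirr : ¬ ∃ r₁ r₂ : ℚ, β₁ = r₁ ∧ β₂ = r₂) :
    {p : ℤ × ℤ × ℤ | 1 ≤ p.1 ∧ p.1 ∣ p.2.1 ^ 2 + p.2.2 ^ 2 ∧
      (p.1 * β₁ - p.2.1) ^ 2 + (p.1 * β₂ - p.2.2) ^ 2 ≤ 1 / 2}.Infinite := by
  refine infinite_of_forall_pos_of_forall_exists_lt
    (fun p => ((p.1 * β₁ - p.2.1) ^ 2 + (p.1 * β₂ - p.2.2) ^ 2) / p.1) ?_ fun ε hε => ?_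
  · rintro ⟨q, b₁, b₂⟩ ⟨hq, -, -⟩
    exact div_pos (sq_add_sq_pos_of_not_both_rational hirr (by lia) b₁ b₂) (by exact_mod_cast hq)
  obtain ⟨x, y, hy, hle, hlt⟩ := exists_gaussianInt_approximation ⟨β₁, β₂⟩ (Real.sqrt_pos.2 hε)
  have hnorm : 0 < y.norm := GaussianInt.norm_pos.2 hy
  have herror := norm_mul_re_sub_sq_add_norm_mul_im_sub_sq ⟨β₁, β₂⟩ x y
  refine ⟨(y.norm, (x * star y).re, (x * star y).im), ⟨hnorm, ?_, herror.trans_le hle⟩, ?_⟩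
  · exact norm_dvd_re_sq_add_im_sq_mul_star x y
  · have hnorm_ne : (y.norm : ℝ) ≠ 0 := by exact_mod_cast hnorm.ne'
    calc _ = ‖(y : ℂ) * ⟨β₁, β₂⟩ - x‖ ^ 2 := by
          rw [herror, norm_gaussianInt_sq, mul_div_cancel_left₀ _ hnorm_ne]
      _ < ε := (Real.lt_sqrt (norm_nonneg _)).1 hlt

theorem one_half_lt_sq_of_sqrt_three_div_pi_lt {γ : ℝ} (hγ : √(3 / Real.pi) < γ) :
    1 / 2 < γ ^ 2 :=
  calc (1 : ℝ) / 2 < 3 / Real.pi := by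
        rw [div_lt_div_iff₀ two_pos Real.pi_pos]
        linarith [Real.pi_lt_four]
    _ < γ ^ 2 := Real.lt_sq_of_sqrt_lt hγ

theorem stmt_3 (γ : ℝ) (hγ : Real.sqrt (3 / Real.pi) < γ) (β₁ β₂ : ℝ)
    (hirr : ¬ (∃ r₁ r₂ : ℚ, β₁ = (r₁ : ℝ) ∧ β₂ = (r₂ : ℝ))) :
    {p : ℤ × ℤ × ℤ | 1 ≤ p.1 ∧ p.1 ∣ p.2.1 ^ 2 + p.2.2 ^ 2 ∧
      ((p.1 : ℝ) * β₁ - (p.2.1 : ℝ)) ^ 2 + ((p.1 : ℝ) * β₂ - (p.2.2 : ℝ)) ^ 2 < γ ^ 2}.Infinite :=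
  (stmt_3_general β₁ β₂ hirr).mono fun _ hp =>
    ⟨hp.1, hp.2.1, hp.2.2.trans_lt (one_half_lt_sq_of_sqrt_three_div_pi_lt hγ)⟩
end

section
/- For every ε > 0 there exists T₀ ≥ 1 such that for every T ≥ T₀ and every point (α₁, α₂, α₃) ∈ ℝ³ on the unit sphere (α₁² + α₂² + α₃² = 1), there exist integers Q, A₁, A₂, A₃ with 1 ≤ Q ≤ T, A₁² + A₂² + A₃² = Q², and √((α₁ − A₁/Q)² + (α₂ − A₂/Q)² + (α₃ − A₃/Q)²) < (4 + ε)/√(Q·T). -/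
/-!
Identify `ℝ⁴` with `ℂ²`. The Hopf map `ℂ² → ℝ³` sends `ℤ[i]²` to integer points whose Euclidean norm
is the integer `|ξ|² + |η|²`, so each nonzero Gaussian vector `x = (ξ, η)` gives a rational point of
the sphere with denominator `Q = |x|²`. Lift the target `α` to a unit vector `u`. Then
`Q = |⟨u, x⟩|² + |det (u, x)|²`, and the squared distance from `α` to the rational point of `x` is
`4 |det (u, x)|² / Q`. Minkowski's linear forms theorem yields a nonzero `x` with
`|⟨u, x⟩|² ≤ T - δ` and `|det (u, x)|² ≤ δ` as soon as `(T - δ) δ ≥ 4`, and for large `T` this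
allows `δ` slightly larger than `4 / T`.
-/

open Matrix MeasureTheory Filter

section LinearForms

variable {ι : Type*} [Fintype ι]

theorem volume_Icc_neg_self {r : ι → ℝ} (hr : ∀ i, 0 ≤ r i) :
    volume (Set.Icc (-r) r) = ENNReal.ofReal (2 ^ Fintype.card ι * ∏ i, r i) := by
  rw [Real.volume_Icc_pi, ← ENNReal.ofReal_prod_of_nonneg fun i _ ↦ by
    simpa using add_nonneg (hr i) (hr i)]
  simp [← two_mul, Finset.prod_mul_distrib]

theorem exists_int_ne_zero_abs_mulVec_le [DecidableEq ι] [Nonempty ι] {M : Matrix ι ι ℝ}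
    (hM : M.det ≠ 0) {r : ι → ℝ} (hr : ∀ i, 0 ≤ r i) (hMr : |M.det| ≤ ∏ i, r i) :
    ∃ n : ι → ℤ, n ≠ 0 ∧ ∀ i, |(M *ᵥ (Int.cast ∘ n)) i| ≤ r i := by
  let b : Module.Basis ι ℝ (ι → ℝ) := basisOfLinearIndependentOfCardEqFinrank
    (linearIndependent_cols_of_det_ne_zero hM) (by simp)
  have hb : ⇑b = M.col := coe_basisOfLinearIndependentOfCardEqFinrank _ _
  have covolume : volume (ZSpan.fundamentalDomain b) = ENNReal.ofReal |M.det| := by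
    rw [ZSpan.volume_fundamentalDomain, hb, ← det_transpose M]
    rfl
  have : Countable (Submodule.span ℤ (Set.range b)).toAddSubgroup :=
    inferInstanceAs (Countable (Submodule.span ℤ (Set.range b)))
  obtain ⟨⟨x, hx⟩, hx0, hxr⟩ := exists_ne_zero_mem_lattice_of_measure_mul_two_pow_le_measure
    (s := Set.Icc (-r) r) (ZSpan.isAddFundamentalDomain' b volume)
    (fun x hx ↦ ⟨neg_le_neg hx.2, neg_le.mp hx.1⟩) (convex_Icc _ _) isCompact_Icc (by
      rw [covolume, volume_Icc_neg_self hr, mul_comm, ENNReal.ofReal_mul (by positivity)]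
      simpa using by gcongr)
  obtain ⟨n, rfl⟩ := (Submodule.mem_span_range_iff_exists_fun ℤ).mp hx
  have sum_eq_mulVec : ∑ i, n i • b i = M *ᵥ (Int.cast ∘ n) := by
    ext j
    simp [hb, mulVec, dotProduct, mul_comm]
  refine ⟨n, ?_, fun i ↦ abs_le.mpr ?_⟩
  · rintro rfl
    simp at hx0
  · rw [← sum_eq_mulVec]
    exact ⟨hxr.1 i, hxr.2 i⟩

end LinearForms

theorem sub_inv_smul_dotProduct_self {ι K : Type*} [Fintype ι] [Field K] {α A : ι → K} {Q : K}
    (hα : α ⬝ᵥ α = 1) (hA : A ⬝ᵥ A = Q ^ 2) (hQ : Q ≠ 0) :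
    (α - Q⁻¹ • A) ⬝ᵥ (α - Q⁻¹ • A) = 2 * (Q - α ⬝ᵥ A) / Q := by
  simp only [sub_dotProduct, dotProduct_sub, smul_dotProduct, dotProduct_smul, smul_eq_mul, hα, hA,
    dotProduct_comm A α]
  field_simp
  ring

section Hopf

variable {R S : Type*} [CommRing R] [CommRing S]

/-- The Hopf map `(ξ, η) ↦ (2 Re (ξ η̄), 2 Im (ξ η̄), |ξ|² - |η|²)` in the real coordinates
`ξ = x 0 + i x 1`, `η = x 2 + i x 3`. The coordinates range over any commutative ring, so that
integer vectors can be mapped to integer vectors. -/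
def hopfMap (x : Fin 4 → R) : Fin 3 → R :=
  ![2 * (x 0 * x 2 + x 1 * x 3), 2 * (x 1 * x 2 - x 0 * x 3),
    x 0 ^ 2 + x 1 ^ 2 - x 2 ^ 2 - x 3 ^ 2]

/-- The matrix of `x ↦ (⟨u, x⟩, det (u, x))`, where `⟨u, x⟩ = ū₁ ξ + ū₂ η` and
`det (u, x) = u₁ η - u₂ ξ`, in the same coordinates as `hopfMap`: rows `0` and `1` are the real and
imaginary parts of the Hermitian product, rows `2` and `3` those of the determinant. -/
def hopfFrame (u : Fin 4 → R) : Matrix (Fin 4) (Fin 4) R :=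
  !![u 0, u 1, u 2, u 3;
    -u 1, u 0, -u 3, u 2;
    -u 2, u 3, u 0, -u 1;
    -u 3, -u 2, u 1, u 0]

theorem hopfMap_comp (f : R →+* S) (x : Fin 4 → R) : hopfMap (f ∘ x) = f ∘ hopfMap x := by
  ext i
  fin_cases i <;> simp [hopfMap, map_ofNat]

theorem hopfMap_dotProduct_self (x : Fin 4 → R) :
    hopfMap x ⬝ᵥ hopfMap x = (x ⬝ᵥ x) ^ 2 := by
  simp only [hopfMap, dotProduct, Fin.sum_univ_three, Fin.sum_univ_four, cons_val]
  ring

theorem det_hopfFrame (u : Fin 4 → R) : (hopfFrame u).det = (u ⬝ᵥ u) ^ 2 := by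
  rw [det_succ_row_zero]
  simp only [hopfFrame, det_fin_three, submatrix_apply, of_apply, cons_val', cons_val,
    Fin.succAbove, Fin.sum_univ_four, Fin.reduceSucc, Fin.reduceCastSucc, Fin.reduceLT, if_true,
    if_false, Fin.coe_ofNat_eq_mod, dotProduct]
  ring

theorem hopfFrame_mulVec (u x : Fin 4 → R) :
    hopfFrame u *ᵥ x =
      ![u 0 * x 0 + u 1 * x 1 + u 2 * x 2 + u 3 * x 3,
        u 0 * x 1 - u 1 * x 0 + u 2 * x 3 - u 3 * x 2,
        u 0 * x 2 - u 1 * x 3 - u 2 * x 0 + u 3 * x 1,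
        u 0 * x 3 + u 1 * x 2 - u 2 * x 1 - u 3 * x 0] := by
  ext i
  fin_cases i <;> simp [hopfFrame, mulVec, dotProduct, Fin.sum_univ_four] <;> ring

theorem sum_sq_hopfFrame_mulVec (u x : Fin 4 → R) :
    ∑ i, (hopfFrame u *ᵥ x) i ^ 2 = (u ⬝ᵥ u) * (x ⬝ᵥ x) := by
  simp only [hopfFrame_mulVec, dotProduct, Fin.sum_univ_four, cons_val]
  ring

theorem dotProduct_self_mul_sub_hopfMap_dotProduct (u x : Fin 4 → R) :
    (u ⬝ᵥ u) * (x ⬝ᵥ x) - hopfMap u ⬝ᵥ hopfMap x =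
      2 * ((hopfFrame u *ᵥ x) 2 ^ 2 + (hopfFrame u *ᵥ x) 3 ^ 2) := by
  simp only [hopfMap, hopfFrame_mulVec, dotProduct, Fin.sum_univ_three, Fin.sum_univ_four, cons_val]
  ring

theorem hopfMap_surjective : Function.Surjective (hopfMap : (Fin 4 → ℝ) → Fin 3 → ℝ) := by
  intro α
  obtain ⟨r, hr, hrα⟩ : ∃ r : ℝ, 0 ≤ r ∧ r ^ 2 = α 0 ^ 2 + α 1 ^ 2 + α 2 ^ 2 :=
    ⟨_, Real.sqrt_nonneg _, Real.sq_sqrt (by positivity)⟩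
  have neg_r_le : -r ≤ α 2 := (abs_le_of_sq_le_sq' (by nlinarith) hr).1
  rcases neg_r_le.eq_or_lt with south | not_south
  · have horizontal : α 0 ^ 2 + α 1 ^ 2 = 0 := by rw [← south] at hrα; linarith
    have hα₀ : α 0 = 0 := pow_eq_zero_iff two_ne_zero |>.mp (by nlinarith)
    have hα₁ : α 1 = 0 := pow_eq_zero_iff two_ne_zero |>.mp (by nlinarith)
    refine ⟨![0, 0, √r, 0], ?_⟩
    ext i
    fin_cases i <;> simp [hopfMap, hα₀, hα₁, Real.sq_sqrt hr, south]
  · -- After a phase change `ξ = a > 0`; then `a² = (r + α 2) / 2` and `η` is determined.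
    obtain ⟨a, ha, ha_sq⟩ : ∃ a : ℝ, 0 < a ∧ a ^ 2 = (r + α 2) / 2 :=
      ⟨_, Real.sqrt_pos.mpr (by linarith), Real.sq_sqrt (by linarith)⟩
    have first : 2 * (a * (α 0 / (2 * a))) = α 0 := by field_simp
    have second : -(2 * (a * (-α 1 / (2 * a)))) = α 1 := by field_simp
    have third : a ^ 2 - (α 0 / (2 * a)) ^ 2 - (-α 1 / (2 * a)) ^ 2 = α 2 := by
      field_simp
      linear_combination (4 * a ^ 2 + 2 * r - 2 * α 2) * ha_sq + hrα
    refine ⟨![a, 0, α 0 / (2 * a), -α 1 / (2 * a)], ?_⟩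
    ext i
    fin_cases i
    · simpa [hopfMap] using first
    · simpa [hopfMap] using second
    · simpa [hopfMap] using third

theorem exists_dotProduct_self_eq_one_hopfMap_eq {α : Fin 3 → ℝ} (hα : α ⬝ᵥ α = 1) :
    ∃ u : Fin 4 → ℝ, u ⬝ᵥ u = 1 ∧ hopfMap u = α := by
  obtain ⟨u, rfl⟩ := hopfMap_surjective α
  rw [hopfMap_dotProduct_self] at hα
  have norm_nonneg : 0 ≤ u ⬝ᵥ u := by simpa using dotProduct_self_star_nonneg u
  exact ⟨u, (pow_eq_one_iff_of_nonneg norm_nonneg two_ne_zero).mp hα, rfl⟩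

end Hopf

section Approximation

variable {ρ δ : ℝ}

theorem exists_int_ne_zero_hopfFrame_mulVec_sq_le {u : Fin 4 → ℝ} (hu : u ⬝ᵥ u = 1)
    (hδ : 0 ≤ δ) (hρδ : 4 ≤ ρ * δ) :
    ∃ n : Fin 4 → ℤ, n ≠ 0 ∧
      (hopfFrame u *ᵥ (Int.cast ∘ n)) 0 ^ 2 + (hopfFrame u *ᵥ (Int.cast ∘ n)) 1 ^ 2 ≤ ρ ∧
      (hopfFrame u *ᵥ (Int.cast ∘ n)) 2 ^ 2 + (hopfFrame u *ᵥ (Int.cast ∘ n)) 3 ^ 2 ≤ δ := by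
  have hρ : 0 ≤ ρ := (pos_of_mul_pos_left (by linarith) hδ).le
  have hdet : (hopfFrame u).det = 1 := by rw [det_hopfFrame, hu, one_pow]
  have hprod : ∏ i, ![√(ρ / 2), √(ρ / 2), √(δ / 2), √(δ / 2)] i = ρ * δ / 4 := by
    simp only [Fin.prod_univ_four, cons_val]
    rw [Real.mul_self_sqrt (by positivity), mul_assoc, Real.mul_self_sqrt (by positivity)]
    ring
  obtain ⟨n, hn, hle⟩ := exists_int_ne_zero_abs_mulVec_le (M := hopfFrame u)
    (r := ![√(ρ / 2), √(ρ / 2), √(δ / 2), √(δ / 2)]) (by simp [hdet])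
    (fun i ↦ by fin_cases i <;> exact Real.sqrt_nonneg _)
    (by rw [hprod, hdet, abs_one]; linarith)
  have sq_le {x y : ℝ} (hy : 0 ≤ y) (h : |x| ≤ √(y / 2)) : x ^ 2 ≤ y / 2 := by
    rwa [Real.le_sqrt (abs_nonneg x) (by positivity), sq_abs] at h
  exact ⟨n, hn, by linarith [sq_le hρ (hle 0), sq_le hρ (hle 1)],
    by linarith [sq_le hδ (hle 2), sq_le hδ (hle 3)]⟩

theorem exists_int_sq_dist_le {α : Fin 3 → ℝ} (hα : α ⬝ᵥ α = 1)
    (hδ : 0 ≤ δ) (hρδ : 4 ≤ ρ * δ) :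
    ∃ (Q : ℤ) (A : Fin 3 → ℤ), 1 ≤ Q ∧ (Q : ℝ) ≤ ρ + δ ∧ A ⬝ᵥ A = Q ^ 2 ∧
      (α - (Q : ℝ)⁻¹ • (Int.cast ∘ A)) ⬝ᵥ (α - (Q : ℝ)⁻¹ • (Int.cast ∘ A)) ≤ 4 * δ / Q := by
  obtain ⟨u, hu, rfl⟩ := exists_dotProduct_self_eq_one_hopfMap_eq hα
  obtain ⟨n, hn, hle_ρ, hle_δ⟩ := exists_int_ne_zero_hopfFrame_mulVec_sq_le hu hδ hρδ
  have hQ : 0 < n ⬝ᵥ n := by simpa using dotProduct_self_star_pos_iff.mpr hn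
  have cast_norm : ((n ⬝ᵥ n : ℤ) : ℝ) = (Int.cast ∘ n) ⬝ᵥ (Int.cast ∘ n) :=
    (Int.castRingHom ℝ).map_dotProduct n n
  have cast_hopf : (Int.cast ∘ hopfMap n : Fin 3 → ℝ) = hopfMap (Int.cast ∘ n) :=
    (hopfMap_comp (Int.castRingHom ℝ) n).symm
  have norm_eq := sum_sq_hopfFrame_mulVec u (Int.cast ∘ n)
  have defect_eq := dotProduct_self_mul_sub_hopfMap_dotProduct u (Int.cast ∘ n)
  rw [hu, one_mul, ← cast_norm] at norm_eq defect_eq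
  refine ⟨n ⬝ᵥ n, hopfMap n, hQ, ?_, hopfMap_dotProduct_self n, ?_⟩
  · rw [← norm_eq, Fin.sum_univ_four]
    linarith
  · have hQ' : (0 : ℝ) < (n ⬝ᵥ n : ℤ) := Int.cast_pos.mpr hQ
    rw [cast_hopf, sub_inv_smul_dotProduct_self hα
      (by rw [hopfMap_dotProduct_self, cast_norm]) hQ'.ne', defect_eq]
    gcongr ?_ / _
    linarith

end Approximation

theorem eventually_exists_four_le_sub_mul {ε : ℝ} (hε : 0 < ε) :
    ∀ᶠ T in atTop, ∃ δ : ℝ, 0 < δ ∧ 4 ≤ (T - δ) * δ ∧ 4 * δ * T < (4 + ε) ^ 2 := by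
  filter_upwards [eventually_ge_atTop 1, eventually_ge_atTop ((4 + ε) ^ 2 / ε)] with T one_le hT
  have T_pos : 0 < T := by linarith
  have correction_le : (4 + ε) ^ 2 / T ^ 2 ≤ ε := by
    rw [div_le_iff₀ (by positivity), ← div_le_iff₀' hε]
    exact hT.trans (le_self_pow₀ one_le two_ne_zero)
  refine ⟨(4 + ε) / T, by positivity, ?_, ?_⟩
  · have : (T - (4 + ε) / T) * ((4 + ε) / T) = 4 + ε - (4 + ε) ^ 2 / T ^ 2 := by field_simp
    linarith
  · rw [mul_assoc, div_mul_cancel₀ _ T_pos.ne']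
    nlinarith

theorem stmt_4 (ε : ℝ) (hε : 0 < ε) :
    ∃ T₀ : ℝ, 1 ≤ T₀ ∧ ∀ T : ℝ, T₀ ≤ T →
      ∀ α₁ α₂ α₃ : ℝ, α₁ ^ 2 + α₂ ^ 2 + α₃ ^ 2 = 1 →
        ∃ Q A₁ A₂ A₃ : ℤ, 1 ≤ Q ∧ (Q : ℝ) ≤ T ∧
          A₁ ^ 2 + A₂ ^ 2 + A₃ ^ 2 = Q ^ 2 ∧
          Real.sqrt ((α₁ - (A₁ : ℝ) / (Q : ℝ)) ^ 2 + (α₂ - (A₂ : ℝ) / (Q : ℝ)) ^ 2 +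
              (α₃ - (A₃ : ℝ) / (Q : ℝ)) ^ 2)
            < (4 + ε) / Real.sqrt ((Q : ℝ) * T) := by
  obtain ⟨T₀, hT₀⟩ := eventually_atTop.mp (eventually_exists_four_le_sub_mul hε)
  refine ⟨max 1 T₀, le_max_left _ _, fun T hT α₁ α₂ α₃ hα ↦ ?_⟩
  obtain ⟨δ, δ_pos, hTδ, hδT⟩ := hT₀ T (le_of_max_le_right hT)
  have T_pos : 0 < T := by linarith [le_of_max_le_left hT]
  obtain ⟨Q, A, hQ, hQT, hA, hdist⟩ := exists_int_sq_dist_le (α := ![α₁, α₂, α₃])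
    (by simpa [dotProduct, Fin.sum_univ_three, ← sq] using hα) δ_pos.le hTδ
  have Q_pos : (0 : ℝ) < Q := Int.cast_pos.mpr (by omega)
  refine ⟨Q, A 0, A 1, A 2, hQ, by linarith,
    by simpa [dotProduct, Fin.sum_univ_three, ← sq] using hA, ?_⟩
  rw [Real.sqrt_lt' (by positivity), div_pow, Real.sq_sqrt (by positivity)]
  calc _ ≤ 4 * δ / Q := by
        simpa [dotProduct, Fin.sum_univ_three, ← sq, div_eq_inv_mul] using hdist
    _ < (4 + ε) ^ 2 / (Q * T) := by
        rw [div_lt_div_iff₀ Q_pos (by positivity)]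
        calc 4 * δ * (Q * T) = 4 * δ * T * Q := by ring
          _ < (4 + ε) ^ 2 * Q := by gcongr
end

section
/- Let (α₁, α₂, α₃) ∈ ℝ³ be a point on the unit sphere (α₁² + α₂² + α₃² = 1) with (α₁, α₂, α₃) ∉ ℚ³, and let ε > 0. Then there exist infinitely many quadruples (Q, A₁, A₂, A₃) of integers with Q ≥ 1, A₁² + A₂² + A₃² = Q², and √((α₁ − A₁/Q)² + (α₂ − A₂/Q)² + (α₃ − A₃/Q)²) < (2·√(3/π) + ε)/Q. -/
/-!
The Hopf map `(z, w) ↦ (2 z̄ w, |z|² - |w|²)` sends `ℤ[i]²` to integer vectors `A` of integer length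
`Q = |z|² + |w|²`. For a unit vector `α` and `s > 0`, the expression
`s (Q + ⟪α, A⟫) + s⁻¹ (Q - ⟪α, A⟫)` is a positive definite binary Hermitian form in `(z, w)`
of determinant `4`. Since `ℤ[i]` has covering radius `1/√2`, Hermite reduction over `ℤ[i]` yields a
nonzero Gaussian vector at which this form is at most `√8`. Hence
`(Q + ⟪α, A⟫) (Q - ⟪α, A⟫) ≤ 2`, while `Q - ⟪α, A⟫ ≤ √8 s` is as small as we please.
As `Q² |α - A / Q|² = 2 Q (Q - ⟪α, A⟫)`, this approximates `α` with every constant `c > √2`.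
-/

open Complex ComplexConjugate
open scoped RealInnerProductSpace

theorem exists_isMinOn_of_finite_sublevel {X Y : Type*} [LinearOrder Y] {S : Set X} {f : X → Y}
    (hS : S.Nonempty) (hfin : ∀ r, {x ∈ S | f x ≤ r}.Finite) : ∃ x ∈ S, IsMinOn f S x := by
  obtain ⟨x₀, hx₀⟩ := hS
  obtain ⟨x, ⟨hxS, hxx₀⟩, hmin⟩ := Set.exists_min_image _ f (hfin (f x₀)) ⟨x₀, hx₀, le_rfl⟩
  refine ⟨x, hxS, fun y hy ↦ ?_⟩
  rcases le_total (f y) (f x₀) with hle | hge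
  · exact hmin y ⟨hy, hle⟩
  · exact hxx₀.trans hge

theorem infinite_of_forall_exists_mem_Ioo {X Y : Type*} [LinearOrder Y] [NoMaxOrder Y]
    {S : Set X} {f : X → Y} {a : Y} (h : ∀ b > a, ∃ x ∈ S, f x ∈ Set.Ioo a b) : S.Infinite := by
  intro hS
  obtain ⟨b, hb⟩ := exists_gt a
  obtain ⟨x, hxS, hx⟩ := h b hb
  obtain ⟨y, ⟨-, hay⟩, hmin⟩ :=
    Set.exists_min_image {x ∈ S | a < f x} f (hS.subset (Set.sep_subset _ _)) ⟨x, hxS, hx.1⟩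
  obtain ⟨z, hzS, haz, hzy⟩ := h (f y) hay
  exact (hmin z ⟨hzS, haz⟩).not_gt hzy

/-! ### Reduction of binary Hermitian forms -/

/-- The binary Hermitian form on `ℂ × ℂ` with Hermitian coefficient matrix `!![a, b; conj b, c]`. -/
structure BinaryHermitianForm where
  a : ℝ
  b : ℂ
  c : ℝ

namespace BinaryHermitianForm

variable (H : BinaryHermitianForm)

/-- The determinant of the coefficient matrix; it is real because the matrix is Hermitian. -/
def det : ℝ := H.a * H.c - normSq H.b

/-- The sesquilinear form of `H`, conjugate-linear in its first argument. -/
def sesq (v w : ℂ × ℂ) : ℂ :=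
  conj v.1 * (H.a * w.1 + H.b * w.2) + conj v.2 * (conj H.b * w.1 + H.c * w.2)

/-- The value `H(v, v)`; the diagonal of `sesq` is real, see `sesq_self`. -/
def eval (v : ℂ × ℂ) : ℝ := (H.sesq v v).re

/-- Positive definiteness of a Hermitian form. -/
def PosDef : Prop := ∀ v, v ≠ 0 → 0 < H.eval v

theorem sesq_self (v : ℂ × ℂ) : H.sesq v v = H.eval v := by
  apply Complex.ext
  · simp only [eval, ofReal_re]
  · simp only [sesq, add_im, mul_im, add_re, mul_re, conj_re, conj_im, ofReal_re, ofReal_im]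
    ring

theorem sesq_sub_smul (k : ℂ) (v w : ℂ × ℂ) :
    H.sesq v (w - k • v) = H.sesq v w - k * H.eval v := by
  rw [← sesq_self]
  simp only [sesq, Prod.fst_sub, Prod.smul_fst, smul_eq_mul, Prod.snd_sub, Prod.smul_snd]
  ring

theorem eval_eq (v : ℂ × ℂ) : H.eval v =
    H.a * normSq v.1 + H.c * normSq v.2 + 2 * (H.b * (conj v.1 * v.2)).re := by
  simp only [eval, sesq, normSq_apply, add_re, mul_re, add_im, mul_im, conj_re, conj_im, ofReal_re,
    ofReal_im]
  ring

theorem eval_mul_eval (v w : ℂ × ℂ) :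
    H.eval v * H.eval w = normSq (H.sesq v w) + H.det * normSq (v.1 * w.2 - v.2 * w.1) := by
  simp only [eval, sesq, det, normSq_apply, add_re, mul_re, add_im, mul_im, sub_re, sub_im, conj_re,
    conj_im, ofReal_re, ofReal_im]
  ring

variable {H}

theorem PosDef.det_pos (hH : H.PosDef) : 0 < H.det := by
  have ha : 0 < H.a := by simpa [eval, sesq] using hH (1, 0) (by simp)
  have heval : H.eval (-H.b, H.a) = H.a * H.det := by
    simp only [eval_eq, det, normSq_apply, mul_re, mul_im, neg_re, neg_im, conj_re, conj_im,
      ofReal_re, ofReal_im]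
    ring
  have hpos := hH (-H.b, H.a) (by simp [ha.ne'])
  exact pos_of_mul_pos_right (heval ▸ hpos) ha.le

theorem PosDef.normSq_snd_le (hH : H.PosDef) (v : ℂ × ℂ) :
    normSq v.2 ≤ H.eval (1, 0) * H.eval v / H.det := by
  rw [le_div_iff₀ hH.det_pos, eval_mul_eval]
  simp [mul_comm, normSq_nonneg]

theorem PosDef.normSq_fst_le (hH : H.PosDef) (v : ℂ × ℂ) :
    normSq v.1 ≤ H.eval (0, 1) * H.eval v / H.det := by
  rw [le_div_iff₀ hH.det_pos, eval_mul_eval]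
  simp [mul_comm, normSq_nonneg]

theorem PosDef.finite_sublevel (hH : H.PosDef) {O : Subring ℂ}
    (hO : ∀ r, {z ∈ (O : Set ℂ) | normSq z ≤ r}.Finite) (r : ℝ) :
    {v | v ∈ O.prod O ∧ H.eval v ≤ r}.Finite := by
  refine ((hO (H.eval (0, 1) * r / H.det)).prod (hO (H.eval (1, 0) * r / H.det))).subset ?_
  rintro v ⟨⟨hv₁, hv₂⟩, hvr⟩
  have hdet := hH.det_pos
  have h₀₁ := hH (0, 1) (by simp)
  have h₁₀ := hH (1, 0) (by simp)
  exact ⟨⟨hv₁, (hH.normSq_fst_le v).trans (by gcongr)⟩,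
    ⟨hv₂, (hH.normSq_snd_le v).trans (by gcongr)⟩⟩

theorem PosDef.eval_mul_eval_sub_smul_le (hH : H.PosDef) {v w : ℂ × ℂ} {k : ℂ} {ρ : ℝ}
    (hv : v ≠ 0) (hdet : v.1 * w.2 - v.2 * w.1 = 1)
    (hk : normSq (H.sesq v w / H.eval v - k) ≤ ρ) :
    H.eval v * H.eval (w - k • v) ≤ ρ * H.eval v ^ 2 + H.det := by
  have hv₀ : (H.eval v : ℂ) ≠ 0 := ofReal_ne_zero.2 (hH v hv).ne'
  have hdet' : v.1 * (w - k • v).2 - v.2 * (w - k • v).1 = 1 := by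
    simp only [Prod.fst_sub, Prod.snd_sub, Prod.smul_fst, Prod.smul_snd, smul_eq_mul]
    linear_combination hdet
  have hsesq : H.sesq v (w - k • v) = (H.sesq v w / H.eval v - k) * H.eval v := by
    rw [sesq_sub_smul, sub_mul, div_mul_cancel₀ _ hv₀]
  rw [eval_mul_eval, hdet', hsesq, map_mul, normSq_ofReal, map_one, mul_one, ← sq]
  gcongr

/-- Hermite's bound. A minimum over first columns of `SL₂(O)`, rather than over all nonzero vectors,
comes with a complementary column `w`, and `w - k • v` is again a first column. -/
theorem PosDef.exists_eval_sq_le (hH : H.PosDef) {O : Subring ℂ}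
    (hO : ∀ r, {z ∈ (O : Set ℂ) | normSq z ≤ r}.Finite) {ρ : ℝ}
    (hρ : ∀ z, ∃ k ∈ O, normSq (z - k) ≤ ρ) :
    ∃ v ∈ O.prod O, v ≠ 0 ∧ (1 - ρ) * H.eval v ^ 2 ≤ H.det := by
  let S : Set (ℂ × ℂ) := {v | v ∈ O.prod O ∧ ∃ w ∈ O.prod O, v.1 * w.2 - v.2 * w.1 = 1}
  have hS : S.Nonempty :=
    ⟨(1, 0), ⟨O.one_mem, O.zero_mem⟩, (0, 1), ⟨O.zero_mem, O.one_mem⟩, by simp⟩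
  obtain ⟨v, ⟨hvO, w, hwO, hdet⟩, hmin⟩ := exists_isMinOn_of_finite_sublevel (f := H.eval) hS
    fun r ↦ (hH.finite_sublevel hO r).subset fun v hv ↦ ⟨hv.1.1, hv.2⟩
  have hv : v ≠ 0 := by
    rintro rfl
    simp at hdet
  obtain ⟨k, hkO, hk⟩ := hρ (H.sesq v w / H.eval v)
  have hmem : w - k • v ∈ S := by
    refine ⟨sub_mem hwO ⟨O.mul_mem hkO hvO.1, O.mul_mem hkO hvO.2⟩, -v, neg_mem hvO, ?_⟩
    simp only [Prod.fst_sub, Prod.snd_sub, Prod.smul_fst, Prod.smul_snd, Prod.fst_neg,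
      Prod.snd_neg, smul_eq_mul]
    linear_combination hdet
  have hle : H.eval v * H.eval v ≤ ρ * H.eval v ^ 2 + H.det :=
    (mul_le_mul_of_nonneg_left (hmin hmem) (hH v hv).le).trans
      (hH.eval_mul_eval_sub_smul_le hv hdet hk)
  exact ⟨v, hvO, hv, by linarith⟩

end BinaryHermitianForm

/-! ### The Gaussian integers -/

theorem finite_gaussianInt_normSq_le (r : ℝ) :
    {z ∈ (GaussianInt.toComplex.range : Set ℂ) | normSq z ≤ r}.Finite := by
  have hbounded (m : ℤ) (hm : (m : ℝ) ^ 2 ≤ r) : m ∈ Set.Icc (-⌈r⌉) ⌈r⌉ := by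
    have hsq : m ^ 2 ≤ ⌈r⌉ := by exact_mod_cast hm.trans (Int.le_ceil r)
    exact abs_le.1 ((Int.le_self_sq |m|).trans (by rwa [sq_abs]))
  refine (((Set.finite_Icc (-⌈r⌉) ⌈r⌉).prod (Set.finite_Icc (-⌈r⌉) ⌈r⌉)).image
    fun m : ℤ × ℤ ↦ GaussianInt.toComplex ⟨m.1, m.2⟩).subset ?_
  rintro _ ⟨⟨x, rfl⟩, hx⟩
  rw [normSq_apply, ← GaussianInt.intCast_re, ← GaussianInt.intCast_im, ← sq, ← sq] at hx
  exact ⟨(x.re, x.im), ⟨hbounded _ (by linarith [sq_nonneg (x.im : ℝ)]),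
    hbounded _ (by linarith [sq_nonneg (x.re : ℝ)])⟩, rfl⟩

theorem exists_gaussianInt_normSq_sub_le (z : ℂ) :
    ∃ k ∈ GaussianInt.toComplex.range, normSq (z - k) ≤ 1 / 2 := by
  have hround (x : ℝ) : (x - round x) ^ 2 ≤ (1 / 2) ^ 2 :=
    sq_le_sq' (abs_le.1 (abs_sub_round x)).1 (abs_le.1 (abs_sub_round x)).2
  refine ⟨_, ⟨⟨round z.re, round z.im⟩, rfl⟩, ?_⟩
  rw [normSq_apply, sub_re, sub_im, GaussianInt.re_toComplex, GaussianInt.im_toComplex]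
  linarith [hround z.re, hround z.im]

/-! ### Approximation of unit vectors by directions -/

section Direction

variable {E : Type*} [NormedAddCommGroup E] [InnerProductSpace ℝ E] {α A : E}

theorem abs_inner_le_norm_of_norm_eq_one (hα : ‖α‖ = 1) (A : E) : |⟪α, A⟫| ≤ ‖A‖ := by
  simpa [hα] using abs_real_inner_le_norm α A

theorem norm_sub_inv_norm_smul_sq (hα : ‖α‖ = 1) (hA : A ≠ 0) :
    ‖α - ‖A‖⁻¹ • A‖ ^ 2 = 2 * (‖A‖ - ⟪α, A⟫) / ‖A‖ := by
  have hA' : ‖A‖ ≠ 0 := norm_ne_zero_iff.2 hA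
  rw [norm_sub_sq_real, hα, inner_smul_right, norm_smul, norm_inv, norm_norm]
  field_simp
  ring

theorem inner_lt_norm_of_ne_inv_norm_smul (hα : ‖α‖ = 1) (hA : A ≠ 0) (hne : α ≠ ‖A‖⁻¹ • A) :
    ⟪α, A⟫ < ‖A‖ := by
  have hpos : 0 < ‖α - ‖A‖⁻¹ • A‖ ^ 2 := pow_pos (norm_pos_iff.2 (sub_ne_zero.2 hne)) 2
  rw [norm_sub_inv_norm_smul_sq hα hA, div_pos_iff_of_pos_right (norm_pos_iff.2 hA)] at hpos
  linarith

theorem norm_sub_inv_norm_smul_lt {c κ : ℝ} (hα : ‖α‖ = 1) (hA : A ≠ 0) (hc : 0 ≤ c)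
    (hprod : (‖A‖ + ⟪α, A⟫) * (‖A‖ - ⟪α, A⟫) ≤ κ) (hsub : (‖A‖ - ⟪α, A⟫) ^ 2 < c ^ 2 - κ) :
    ‖α - ‖A‖⁻¹ • A‖ < c / ‖A‖ := by
  have hA' : 0 < ‖A‖ := norm_pos_iff.2 hA
  refine lt_of_pow_lt_pow_left₀ 2 (by positivity) ?_
  rw [norm_sub_inv_norm_smul_sq hα hA, div_pow, div_lt_div_iff₀ hA' (by positivity)]
  have hbound : 2 * (‖A‖ - ⟪α, A⟫) * ‖A‖ < c ^ 2 := by linarith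
  calc 2 * (‖A‖ - ⟪α, A⟫) * ‖A‖ ^ 2 = 2 * (‖A‖ - ⟪α, A⟫) * ‖A‖ * ‖A‖ := by ring
    _ < c ^ 2 * ‖A‖ := by gcongr

end Direction

/-! ### The Hopf map and the forms attached to a point of the sphere -/

/-- The Hopf map `ℂ² → ℝ³`, which sends the sphere of radius `r` onto the sphere of radius `r²`. -/
noncomputable def hopf (v : ℂ × ℂ) : EuclideanSpace ℝ (Fin 3) :=
  !₂[2 * (conj v.1 * v.2).re, 2 * (conj v.1 * v.2).im, normSq v.1 - normSq v.2]

theorem norm_hopf (v : ℂ × ℂ) : ‖hopf v‖ = normSq v.1 + normSq v.2 := by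
  rw [EuclideanSpace.norm_eq, Real.sqrt_eq_iff_eq_sq (by positivity)
    (add_nonneg (normSq_nonneg _) (normSq_nonneg _))]
  simp only [hopf, Fin.sum_univ_three, Matrix.cons_val, Real.norm_eq_abs, sq_abs, normSq_apply,
    mul_re, mul_im, conj_re, conj_im]
  ring

theorem hopf_ne_zero {v : ℂ × ℂ} (hv : v ≠ 0) : hopf v ≠ 0 := by
  contrapose! hv
  have hsum := norm_hopf v
  rw [hv, norm_zero, eq_comm, add_eq_zero_iff_of_nonneg (normSq_nonneg _) (normSq_nonneg _)] at hsum
  exact Prod.ext (normSq_eq_zero.1 hsum.1) (normSq_eq_zero.1 hsum.2)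

/-- The Hermitian form `v ↦ s (‖A‖ + ⟪α, A⟫) + t (‖A‖ - ⟪α, A⟫)` with `A = hopf v`. In terms of the
Pauli matrices its matrix is `s (1 + α · σ) + t (1 - α · σ)`. -/
noncomputable def sphereForm (α : EuclideanSpace ℝ (Fin 3)) (s t : ℝ) : BinaryHermitianForm where
  a := s * (1 + α 2) + t * (1 - α 2)
  b := ⟨(s - t) * α 0, (t - s) * α 1⟩
  c := s * (1 - α 2) + t * (1 + α 2)

section SphereForm

variable {α : EuclideanSpace ℝ (Fin 3)} {s t : ℝ}

theorem eval_sphereForm (v : ℂ × ℂ) : (sphereForm α s t).eval v =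
    s * (‖hopf v‖ + ⟪α, hopf v⟫) + t * (‖hopf v‖ - ⟪α, hopf v⟫) := by
  have hinner : ⟪α, hopf v⟫ = α 0 * (2 * (conj v.1 * v.2).re) +
      α 1 * (2 * (conj v.1 * v.2).im) + α 2 * (normSq v.1 - normSq v.2) := by
    simp [hopf, PiLp.inner_apply, Fin.sum_univ_three, mul_comm]
  rw [BinaryHermitianForm.eval_eq, norm_hopf, hinner, mul_re _ (conj v.1 * v.2)]
  simp only [sphereForm]
  ring

theorem det_sphereForm (hα : ‖α‖ = 1) : (sphereForm α s t).det = 4 * (s * t) := by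
  have hsum : α 0 ^ 2 + α 1 ^ 2 + α 2 ^ 2 = 1 := by
    simpa [Fin.sum_univ_three, hα] using (EuclideanSpace.real_norm_sq_eq α).symm
  simp only [BinaryHermitianForm.det, sphereForm, normSq_apply]
  linear_combination -(s - t) ^ 2 * hsum

theorem posDef_sphereForm (hα : ‖α‖ = 1) (hs : 0 < s) (ht : 0 < t) :
    (sphereForm α s t).PosDef := by
  intro v hv
  have hpos : 0 < ‖hopf v‖ := norm_pos_iff.2 (hopf_ne_zero hv)
  obtain ⟨hlower, hupper⟩ := abs_le.1 (abs_inner_le_norm_of_norm_eq_one hα (hopf v))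
  rw [eval_sphereForm]
  rcases le_or_gt ⟪α, hopf v⟫ 0 with hle | hgt
  · exact add_pos_of_nonneg_of_pos (mul_nonneg hs.le (by linarith)) (mul_pos ht (by linarith))
  · exact add_pos_of_pos_of_nonneg (mul_pos hs (by linarith)) (mul_nonneg ht.le (by linarith))

end SphereForm

/-! ### Rational points -/

/-- The nonzero integer vectors `A` of integer length, i.e. the integer points of the cone over the
unit sphere; the rational points of the sphere are the directions `‖A‖⁻¹ • A`. -/
def integralCone : Set (EuclideanSpace ℝ (Fin 3)) :=
  {A | A ≠ 0 ∧ (∃ Q : ℤ, ‖A‖ = Q) ∧ ∀ i, ∃ m : ℤ, A i = m}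

theorem hopf_mem_integralCone {v : ℂ × ℂ}
    (hv : v ∈ GaussianInt.toComplex.range.prod GaussianInt.toComplex.range) (hv₀ : v ≠ 0) :
    hopf v ∈ integralCone := by
  obtain ⟨p, q⟩ := v
  obtain ⟨⟨x, rfl⟩, ⟨y, rfl⟩⟩ := hv
  refine ⟨hopf_ne_zero hv₀, ⟨x.norm + y.norm, ?_⟩, fun i ↦ ?_⟩
  · simp [norm_hopf]
  · fin_cases i
    · exact ⟨2 * (star x * y).re, by simp [hopf]⟩
    · exact ⟨2 * (star x * y).im, by simp [hopf]⟩
    · exact ⟨x.norm - y.norm, by simp [hopf]⟩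

section Approximation

variable {α : EuclideanSpace ℝ (Fin 3)}

theorem exists_mem_integralCone_mul_le (hα : ‖α‖ = 1) {δ : ℝ} (hδ : 0 < δ) :
    ∃ A ∈ integralCone, (‖A‖ + ⟪α, A⟫) * (‖A‖ - ⟪α, A⟫) ≤ 2 ∧ ‖A‖ - ⟪α, A⟫ < δ := by
  obtain ⟨s, hs, hsδ⟩ : ∃ s, 0 < s ∧ 3 * s = δ := ⟨δ / 3, by positivity, by ring⟩
  obtain ⟨v, hvO, hv₀, hle⟩ := (posDef_sphereForm hα hs (inv_pos.2 hs)).exists_eval_sq_le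
    finite_gaussianInt_normSq_le exists_gaussianInt_normSq_sub_le
  rw [det_sphereForm hα, mul_inv_cancel₀ hs.ne', eval_sphereForm] at hle
  obtain ⟨hlower, -⟩ := abs_le.1 (abs_inner_le_norm_of_norm_eq_one hα (hopf v))
  refine ⟨hopf v, hopf_mem_integralCone hvO hv₀, ?_⟩
  set P := ‖hopf v‖ + ⟪α, hopf v⟫
  set N := ‖hopf v‖ - ⟪α, hopf v⟫
  have hsP : 0 ≤ s * P := mul_nonneg hs.le (by linarith)
  constructor
  · -- AM-GM: `4 P N = 4 (s P) (s⁻¹ N) ≤ (s P + s⁻¹ N)² ≤ 8`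
    have hPN : P * N = (s * P) * (s⁻¹ * N) := by field_simp
    linarith [four_mul_le_sq_add (s * P) (s⁻¹ * N)]
  · have hsum : s * P + s⁻¹ * N < 3 := lt_of_pow_lt_pow_left₀ 2 (by norm_num) (by linarith)
    rw [← hsδ, ← inv_mul_lt_iff₀' hs]
    linarith

theorem infinite_integralCone_norm_sub_lt (hα : ‖α‖ = 1)
    (hirr : ∀ A ∈ integralCone, α ≠ ‖A‖⁻¹ • A) {c : ℝ} (hc : √2 < c) :
    {A ∈ integralCone | ‖α - ‖A‖⁻¹ • A‖ < c / ‖A‖}.Infinite := by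
  refine infinite_of_forall_exists_mem_Ioo (f := fun A ↦ ‖A‖ - ⟪α, A⟫) (a := 0) fun δ hδ ↦ ?_
  have hc₀ : 0 ≤ c := (Real.sqrt_nonneg 2).trans hc.le
  have hgap : 0 < c ^ 2 - 2 := sub_pos.2 (Real.lt_sq_of_sqrt_lt hc)
  obtain ⟨A, hA, hprod, hlt⟩ :=
    exists_mem_integralCone_mul_le hα (lt_min hδ (Real.sqrt_pos.2 hgap))
  have hpos : 0 < ‖A‖ - ⟪α, A⟫ :=
    sub_pos.2 (inner_lt_norm_of_ne_inv_norm_smul hα hA.1 (hirr A hA))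
  have hsub : (‖A‖ - ⟪α, A⟫) ^ 2 < c ^ 2 - 2 :=
    (Real.lt_sqrt hpos.le).1 (hlt.trans_le (min_le_right _ _))
  exact ⟨A, ⟨hA, norm_sub_inv_norm_smul_lt hα hA.1 hc₀ hprod hsub⟩, hpos,
    hlt.trans_le (min_le_left _ _)⟩

theorem exists_rat_of_eq_inv_norm_smul {A : EuclideanSpace ℝ (Fin 3)} (hA : A ∈ integralCone)
    (h : α = ‖A‖⁻¹ • A) (i : Fin 3) : ∃ r : ℚ, α i = r := by
  obtain ⟨-, ⟨Q, hQ⟩, hint⟩ := hA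
  obtain ⟨m, hm⟩ := hint i
  exact ⟨(Q : ℚ)⁻¹ * m, by simp [h, hQ, hm]⟩

end Approximation

theorem exists_int_coordinates_of_mem_integralCone {A : EuclideanSpace ℝ (Fin 3)}
    (hA : A ∈ integralCone) : ∃ Q A₁ A₂ A₃ : ℤ, 1 ≤ Q ∧ A₁ ^ 2 + A₂ ^ 2 + A₃ ^ 2 = Q ^ 2 ∧
      ‖A‖ = Q ∧ A = !₂[(A₁ : ℝ), (A₂ : ℝ), (A₃ : ℝ)] := by
  obtain ⟨hA₀, ⟨Q, hQ⟩, hint⟩ := hA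
  choose m hm using hint
  have hQ₀ : 1 ≤ Q := by
    have hpos : (0 : ℝ) < Q := hQ ▸ norm_pos_iff.2 hA₀
    exact_mod_cast hpos
  have hsum : (m 0 : ℝ) ^ 2 + (m 1 : ℝ) ^ 2 + (m 2 : ℝ) ^ 2 = (Q : ℝ) ^ 2 := by
    simpa [Fin.sum_univ_three, hQ, hm] using (EuclideanSpace.real_norm_sq_eq A).symm
  refine ⟨Q, m 0, m 1, m 2, hQ₀, by exact_mod_cast hsum, hQ, ?_⟩
  ext i
  fin_cases i <;> simp [hm]

theorem stmt_5_general (α₁ α₂ α₃ : ℝ) (hsphere : α₁ ^ 2 + α₂ ^ 2 + α₃ ^ 2 = 1)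
    (hirr : ¬ (∃ r₁ r₂ r₃ : ℚ, α₁ = (r₁ : ℝ) ∧ α₂ = (r₂ : ℝ) ∧ α₃ = (r₃ : ℝ)))
    (c : ℝ) (hc : √2 < c) :
    {p : ℤ × ℤ × ℤ × ℤ | 1 ≤ p.1 ∧
      p.2.1 ^ 2 + p.2.2.1 ^ 2 + p.2.2.2 ^ 2 = p.1 ^ 2 ∧
      √((α₁ - (p.2.1 : ℝ) / (p.1 : ℝ)) ^ 2 + (α₂ - (p.2.2.1 : ℝ) / (p.1 : ℝ)) ^ 2 +
          (α₃ - (p.2.2.2 : ℝ) / (p.1 : ℝ)) ^ 2) < c / (p.1 : ℝ)}.Infinite := by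
  have hα : ‖!₂[α₁, α₂, α₃]‖ = 1 := by
    simp [EuclideanSpace.norm_eq, Fin.sum_univ_three, hsphere]
  have hirr' : ∀ A ∈ integralCone, !₂[α₁, α₂, α₃] ≠ ‖A‖⁻¹ • A := by
    intro A hA h
    choose r hr using exists_rat_of_eq_inv_norm_smul hA h
    exact hirr ⟨r 0, r 1, r 2, hr 0, hr 1, hr 2⟩
  refine .of_image (fun p ↦ !₂[(p.2.1 : ℝ), (p.2.2.1 : ℝ), (p.2.2.2 : ℝ)])
    ((infinite_integralCone_norm_sub_lt hα hirr' hc).mono ?_)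
  rintro A ⟨hA, hlt⟩
  obtain ⟨Q, A₁, A₂, A₃, hQ, hsum, hnorm, rfl⟩ := exists_int_coordinates_of_mem_integralCone hA
  refine ⟨(Q, A₁, A₂, A₃), ⟨hQ, hsum, ?_⟩, rfl⟩
  rw [hnorm] at hlt
  simpa [EuclideanSpace.norm_eq, Fin.sum_univ_three, div_eq_inv_mul] using hlt

theorem sqrt_two_lt_two_mul_sqrt_three_div_pi : √2 < 2 * √(3 / Real.pi) := by
  rw [Real.sqrt_lt' (by positivity), mul_pow, Real.sq_sqrt (by positivity), mul_div_assoc',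
    lt_div_iff₀ Real.pi_pos]
  linarith [Real.pi_lt_four]

theorem stmt_5 (α₁ α₂ α₃ : ℝ) (hsphere : α₁ ^ 2 + α₂ ^ 2 + α₃ ^ 2 = 1)
    (hirr : ¬ (∃ r₁ r₂ r₃ : ℚ, α₁ = (r₁ : ℝ) ∧ α₂ = (r₂ : ℝ) ∧ α₃ = (r₃ : ℝ)))
    (ε : ℝ) (hε : 0 < ε) :
    {p : ℤ × ℤ × ℤ × ℤ | 1 ≤ p.1 ∧
      p.2.1 ^ 2 + p.2.2.1 ^ 2 + p.2.2.2 ^ 2 = p.1 ^ 2 ∧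
      Real.sqrt ((α₁ - (p.2.1 : ℝ) / (p.1 : ℝ)) ^ 2 + (α₂ - (p.2.2.1 : ℝ) / (p.1 : ℝ)) ^ 2 +
          (α₃ - (p.2.2.2 : ℝ) / (p.1 : ℝ)) ^ 2)
        < (2 * Real.sqrt (3 / Real.pi) + ε) / (p.1 : ℝ)}.Infinite :=
  stmt_5_general α₁ α₂ α₃ hsphere hirr _
    (sqrt_two_lt_two_mul_sqrt_three_div_pi.trans (lt_add_of_pos_right _ hε))
end

section
/- Let 0 < γ ≤ 1 and let (z, y, x₁, x₂) ∈ ℝ⁴ satisfy |z + y| < 2 and ((z − y)/2)² + (x₁/γ)² + (x₂/γ)² < 1. Then |zy − x₁² − x₂²| < 1. That is, the convex body 𝔎 = {(z,y,x₁,x₂) : |z+y| < 2, ((z−y)/2)² + (x₁/γ)² + (x₂/γ)² < 1} is contained in the body 𝔓 = {(z,y,x₁,x₂) : |zy − x₁² − x₂²| < 1}. -/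
/-!
Since `z * y = ((z + y) / 2) ^ 2 - ((z - y) / 2) ^ 2`, the form `z * y - ∑ i, x i ^ 2` is the
difference of `((z + y) / 2) ^ 2` and `((z - y) / 2) ^ 2 + ∑ i, x i ^ 2`. On the convex body both
of these lie in `[0, 1)`, so they differ by less than `1`.
-/

section Field

variable {K : Type*} [Field K]

theorem mul_eq_sq_half_add_sub_sq_half_sub [NeZero (2 : K)] (z y : K) :
    z * y = ((z + y) / 2) ^ 2 - ((z - y) / 2) ^ 2 := by
  field_simp
  ring

variable [LinearOrder K] [IsStrictOrderedRing K]

theorem sq_le_div_sq_of_abs_le_one {c : K} (hc0 : c ≠ 0) (hc1 : |c| ≤ 1) (x : K) :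
    x ^ 2 ≤ (x / c) ^ 2 := by
  rw [sq_le_sq, abs_div]
  exact le_div_self (abs_nonneg x) (abs_pos.mpr hc0) hc1

theorem sq_half_lt_one_of_abs_lt_two {s : K} (hs : |s| < 2) : (s / 2) ^ 2 < 1 := by
  rwa [sq_lt_one_iff_abs_lt_one, abs_div, abs_two, div_lt_one two_pos]

theorem abs_mul_sub_sum_sq_lt_one {ι : Type*} [Fintype ι] {z y : K} {x : ι → K}
    (hsum : |z + y| < 2) (hball : ((z - y) / 2) ^ 2 + ∑ i, x i ^ 2 < 1) :
    |z * y - ∑ i, x i ^ 2| < 1 := by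
  rw [mul_eq_sq_half_add_sub_sq_half_sub, sub_sub]
  exact abs_sub_lt_of_nonneg_of_lt (by positivity) (sq_half_lt_one_of_abs_lt_two hsum)
    (by positivity) hball

theorem stmt_8_general {ι : Type*} [Fintype ι] {c : ι → K} (hc0 : ∀ i, c i ≠ 0)
    (hc1 : ∀ i, |c i| ≤ 1) {z y : K} {x : ι → K} (hsum : |z + y| < 2)
    (hellipsoid : ((z - y) / 2) ^ 2 + ∑ i, (x i / c i) ^ 2 < 1) :
    |z * y - ∑ i, x i ^ 2| < 1 := by
  have sum_sq_le : ∑ i, x i ^ 2 ≤ ∑ i, (x i / c i) ^ 2 :=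
    Finset.sum_le_sum fun i _ ↦ sq_le_div_sq_of_abs_le_one (hc0 i) (hc1 i) (x i)
  exact abs_mul_sub_sum_sq_lt_one hsum ((add_le_add_right sum_sq_le _).trans_lt hellipsoid)

end Field

theorem stmt_8 (γ : ℝ) (hγ0 : 0 < γ) (hγ1 : γ ≤ 1) (z y x₁ x₂ : ℝ)
    (h1 : |z + y| < 2)
    (h2 : ((z - y) / 2) ^ 2 + (x₁ / γ) ^ 2 + (x₂ / γ) ^ 2 < 1) :
    |z * y - x₁ ^ 2 - x₂ ^ 2| < 1 := by
  simpa [sub_sub] using stmt_8_general (c := fun _ : Fin 2 ↦ γ) (x := ![x₁, x₂])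
    (fun _ ↦ hγ0.ne') (fun _ ↦ (abs_of_pos hγ0).trans_le hγ1) h1 (by simpa [add_assoc] using h2)
end

section
/- Let q ≥ 1, b₁, b₂ be integers such that q divides b₁² + b₂². Then q divides each of 2b₁q, 2b₂q, q² − b₁² − b₂², and q² + b₁² + b₂²; consequently, writing N = q² + b₁² + b₂², the rational point (2b₁q/N, 2b₂q/N, (q² − b₁² − b₂²)/N) on the unit sphere, written in lowest terms as (A₁/Q, A₂/Q, A₃/Q) with gcd(Q, A₁, A₂, A₃) = 1, has denominator Q ≤ N/q = q + (b₁² + b₂²)/q. -/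
/-!
If a point has coordinates `Aᵢ / Q` in lowest terms, then `Q` divides every other common denominator
of the coordinates. Both the numerators and the denominator `N` of the given point are multiples
of `q`, so `N / q` is such a common denominator.
-/

/-- The family of fractions `A i / Q` with common denominator `Q` is in lowest terms: `Q` and all
the `A i` have no common divisor but the units. Stating this through divisors rather than as
`gcd = 1` allows any index type and any monoid. -/
def InLowestTerms {R ι : Type*} [CommMonoid R] (Q : R) (A : ι → R) : Prop :=
  ∀ d, d ∣ Q → (∀ i, d ∣ A i) → IsUnit d

namespace InLowestTerms

variable {R K ι : Type*} {Q : R} {A : ι → R}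

theorem dvd_of_forall_dvd_mul [CommMonoidWithZero R] [GCDMonoid R]
    (h : InLowestTerms Q A) {M : R} (hdvd : ∀ i, Q ∣ M * A i) : Q ∣ M := by
  rcases eq_or_ne (gcd Q M) 0 with hgcd | hgcd
  · exact ((gcd_eq_zero_iff Q M).mp hgcd).2 ▸ dvd_zero Q
  obtain ⟨Q', hQ'⟩ := gcd_dvd_left Q M
  have hQ'A (i : ι) : Q' ∣ A i := by
    have : gcd Q M * Q' ∣ gcd Q M * A i := hQ' ▸ dvd_gcd_mul_of_dvd_mul (hdvd i)
    exact (mul_dvd_mul_iff_left hgcd).mp this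
  have hunit : IsUnit Q' := h Q' (Dvd.intro_left _ hQ'.symm) hQ'A
  calc Q ∣ gcd Q M := hunit.dvd_mul_right.mp hQ'.dvd
    _ ∣ M := gcd_dvd_right Q M

variable [CommRing R] [GCDMonoid R] [Field K] [Algebra R K] [IsFractionRing R K]

theorem dvd_of_div_eq_div (h : InLowestTerms Q A) (hQ : Q ≠ 0) {M : R} (hM : M ≠ 0) {c : ι → R}
    (heq : ∀ i, algebraMap R K (A i) / algebraMap R K Q =
      algebraMap R K (c i) / algebraMap R K M) : Q ∣ M := by
  have map_ne_zero {x : R} (hx : x ≠ 0) : algebraMap R K x ≠ 0 := by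
    simpa using hx
  refine h.dvd_of_forall_dvd_mul fun i ↦ ⟨c i, IsFractionRing.injective R K ?_⟩
  have hcross := (div_eq_div_iff (map_ne_zero hQ) (map_ne_zero hM)).mp (heq i)
  rw [map_mul, map_mul]
  linear_combination hcross

theorem mul_dvd_of_div_eq_div (h : InLowestTerms Q A) (hQ : Q ≠ 0) {q N : R} (hN : N ≠ 0)
    (hqN : q ∣ N) {c : ι → R} (hqc : ∀ i, q ∣ c i)
    (heq : ∀ i, algebraMap R K (A i) / algebraMap R K Q =
      algebraMap R K (c i) / algebraMap R K N) : q * Q ∣ N := by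
  obtain ⟨M, rfl⟩ := hqN
  choose c' hc' using hqc
  obtain ⟨hq, hM⟩ := mul_ne_zero_iff.mp hN
  have hq' : algebraMap R K q ≠ 0 := by simpa using hq
  refine mul_dvd_mul_left q (h.dvd_of_div_eq_div (K := K) hQ hM (c := c') fun i ↦ ?_)
  rw [heq, hc', map_mul, map_mul, mul_div_mul_left _ _ hq']

end InLowestTerms

theorem inLowestTerms_of_int_gcd_eq_one {Q A₁ A₂ A₃ : ℤ}
    (h : Int.gcd Q (Int.gcd A₁ (Int.gcd A₂ A₃)) = 1) : InLowestTerms Q ![A₁, A₂, A₃] := by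
  intro d hQ hA
  have hgcd : d ∣ (Int.gcd Q (Int.gcd A₁ (Int.gcd A₂ A₃)) : ℤ) :=
    Int.dvd_coe_gcd hQ (Int.dvd_coe_gcd (hA 0) (Int.dvd_coe_gcd (hA 1) (hA 2)))
  exact isUnit_of_dvd_one (by simpa [h] using hgcd)

theorem stmt_12 (q b₁ b₂ : ℤ) (hq : 1 ≤ q) (hdvd : q ∣ b₁ ^ 2 + b₂ ^ 2) :
    q ∣ 2 * b₁ * q ∧ q ∣ 2 * b₂ * q ∧
    q ∣ q ^ 2 - b₁ ^ 2 - b₂ ^ 2 ∧ q ∣ q ^ 2 + b₁ ^ 2 + b₂ ^ 2 ∧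
    ∀ Q A₁ A₂ A₃ : ℤ, 1 ≤ Q → Int.gcd Q (Int.gcd A₁ (Int.gcd A₂ A₃)) = 1 →
      (A₁ : ℚ) / (Q : ℚ) = (2 * b₁ * q : ℤ) / ((q ^ 2 + b₁ ^ 2 + b₂ ^ 2 : ℤ) : ℚ) →
      (A₂ : ℚ) / (Q : ℚ) = (2 * b₂ * q : ℤ) / ((q ^ 2 + b₁ ^ 2 + b₂ ^ 2 : ℤ) : ℚ) →
      (A₃ : ℚ) / (Q : ℚ) = ((q ^ 2 - b₁ ^ 2 - b₂ ^ 2 : ℤ) : ℚ) / ((q ^ 2 + b₁ ^ 2 + b₂ ^ 2 : ℤ) : ℚ) →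
      (Q : ℚ) ≤ ((q ^ 2 + b₁ ^ 2 + b₂ ^ 2 : ℤ) : ℚ) / (q : ℚ) := by
  have hq_sub : q ∣ q ^ 2 - b₁ ^ 2 - b₂ ^ 2 :=
    sub_sub (q ^ 2) _ _ ▸ dvd_sub (dvd_pow_self q two_ne_zero) hdvd
  have hq_add : q ∣ q ^ 2 + b₁ ^ 2 + b₂ ^ 2 :=
    add_assoc (q ^ 2) _ _ ▸ dvd_add (dvd_pow_self q two_ne_zero) hdvd
  refine ⟨dvd_mul_left _ _, dvd_mul_left _ _, hq_sub, hq_add, fun Q A₁ A₂ A₃ hQ hgcd h₁ h₂ h₃ ↦ ?_⟩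
  have hN : 0 < q ^ 2 + b₁ ^ 2 + b₂ ^ 2 := by positivity
  have hqQ : q * Q ∣ q ^ 2 + b₁ ^ 2 + b₂ ^ 2 :=
    (inLowestTerms_of_int_gcd_eq_one hgcd).mul_dvd_of_div_eq_div (K := ℚ) (by lia) hN.ne' hq_add
      (c := ![2 * b₁ * q, 2 * b₂ * q, q ^ 2 - b₁ ^ 2 - b₂ ^ 2])
      (Fin.forall_fin_succ.mpr
        ⟨dvd_mul_left _ _, Fin.forall_fin_two.mpr ⟨dvd_mul_left _ _, hq_sub⟩⟩)
      (Fin.forall_fin_succ.mpr ⟨h₁, Fin.forall_fin_two.mpr ⟨h₂, h₃⟩⟩)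
  rw [le_div_iff₀' (by exact_mod_cast hq)]
  exact_mod_cast Int.le_of_dvd hN hqQ
end
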